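/- Let n ≥ 1, Q = 2n+2, and suppose 1 < p < ∞, 1 < q' < ∞, q is the Hölder conjugate of q' (1/q + 1/q' = 1), p' is the Hölder conjugate of p, 0 < λ < Q, α + β ≥ 0, λ + α + β ≤ Q, β < Q/p', α < Q/q, 1/p + 1/q' + (λ+α+β)/Q = 2, and q > p. Let C = sup{ ‖I_λ(g)(u)·|u|^{-α}‖_{L^q(ℍⁿ)} : g ≥ 0, ‖g(v)·|v|^{β}‖_{L^p(ℍⁿ)} = 1 }, and let (g_i) be a sequence of nonnegative functions with ‖g_i(v)·|v|^{β}‖_{L^p(ℍⁿ)} = 1, ‖I_λ(g_i)(u)·|u|^{-α}‖_{L^q(ℍⁿ)} → C, and ∫_{B_ℍ(0,1)} |g_i(v)|^p |v|^{βp} dv = 1/2 for all i. Set μ_i = |g_i(v)|^p |v|^{βp} dv. Then: (i) the compactness alternative holds for (μ_i), i.e. there exist v_i ∈ ℍⁿ such that for every ε > 0 there is R_ε > 0 with μ_i(B_ℍ(v_i,R_ε)) ≥ 1 − ε for all i; and (ii) any weak-* limit μ of a subsequence of (μ_i) satisfies μ(ℍⁿ) = 1. -/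

import Mathlib

open MeasureTheory ENNReal Filter

noncomputable section

/-- The Heisenberg group `ℍⁿ = ℂⁿ × ℝ` (as a measure space, with Lebesgue/Haar measure). -/
abbrev Hn (n : ℕ) := (Fin n → ℂ) × ℝ

/-- Euclidean norm of the `ℂⁿ` component. -/
def znorm {n : ℕ} (z : Fin n → ℂ) : ℝ := Real.sqrt (∑ j, Complex.normSq (z j))

/-- Homogeneous norm `|u| = (|z|⁴ + t²)^{1/4}` on the Heisenberg group. -/
def Hnorm {n : ℕ} (u : Hn n) : ℝ := (znorm u.1 ^ 4 + u.2 ^ 2) ^ ((1 : ℝ)/4)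

/-- Heisenberg group law `(z,t)·(z',t') = (z+z', t+t'+2 Im (z ⬝ conj z'))`. -/
def Hmul {n : ℕ} (u v : Hn n) : Hn n :=
  (u.1 + v.1, u.2 + v.2 + 2 * (∑ j, u.1 j * (starRingEnd ℂ) (v.1 j)).im)

/-- Heisenberg group inverse `(z,t)⁻¹ = (-z,-t)`. -/
def Hinv {n : ℕ} (u : Hn n) : Hn n := (-u.1, -u.2)

/-- Left-invariant quasi-distance `d(u,v) = |u⁻¹ v|`. -/
def Hdist {n : ℕ} (u v : Hn n) : ℝ := Hnorm (Hmul (Hinv u) v)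

/-- Heisenberg ball `B_ℍ(u,R)`. -/
def Hball {n : ℕ} (u : Hn n) (R : ℝ) : Set (Hn n) := {v | Hdist u v < R}

/-- Fractional integral operator `I_λ(g)(u) = ∫ g(v)/|u⁻¹v|^λ dv`. -/
def Ilam {n : ℕ} (lam : ℝ) (g : Hn n → ℝ) (u : Hn n) : ℝ :=
  ∫ v, g v / Hdist u v ^ lam

/-- The measure `|g(v)|^p |v|^{βp} dv` on the Heisenberg group. -/
def muWD {n : ℕ} (p β : ℝ) (g : Hn n → ℝ) : Measure (Hn n) :=
  volume.withDensity (fun v => ENNReal.ofReal (|g v| ^ p * Hnorm v ^ (β * p)))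

/-- The best constant `C_{Q,α,β,p,q'}` of the Stein–Weiss inequality with full weights. -/
def SWbestConst (n : ℕ) (p q lam α β : ℝ) : ℝ≥0∞ :=
  sSup { c : ℝ≥0∞ | ∃ g : Hn n → ℝ, Measurable g ∧ (∀ v, 0 ≤ g v) ∧
    eLpNorm (fun v => g v * Hnorm v ^ β) (ENNReal.ofReal p) volume = 1 ∧
    c = eLpNorm (fun u => Ilam lam g u * Hnorm u ^ (-α)) (ENNReal.ofReal q) volume }

/-!
Absorbing the weights into the functions turns the problem into one about the positive kernel
`|u|^{-α} |v|^{-β} |u⁻¹v|^{-λ}` acting from `L^p` to `L^q`. It is bounded: where `|u|` and `|v|` are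
comparable it is controlled by the unweighted Hardy–Littlewood–Sobolev kernel (via Hedberg's
pointwise estimate), and elsewhere by a Hardy-type kernel (via Schur's test with a power weight).
Because `α < Q / q` and `β < Q / p'` are strict, the part of the kernel coupling points whose norms
differ by a factor at least `L` has small norm as `L → ∞`.

Suppose a near-maximizer carries mass `1/2` in the unit ball and mass at least `δ` far away. By
pigeonhole some annulus of ratio `L` in between carries little mass, so the inner and outer parts,
of masses `a` and `b`, contribute almost independently. Since `q > p`, `a^{q/p} + b^{q/p}` stays
strictly below `1`, contradicting near-maximality. Hence the measures `μ_i` are tight, with all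
centres at the origin, and tightness prevents any loss of mass in a weak-* limit.
-/

open scoped NNReal

/-! ### Positive kernel operators -/

section KernelOperators

variable {X : Type*} [MeasurableSpace X] {μ : Measure X}

/-- The positive integral operator `F ↦ ∫ K(·, v) F(v) dμ(v)`, with values in `[0, ∞]` so that no
integrability is required to form it. -/
def kernelOp (μ : Measure X) (K : X → X → ℝ≥0∞) (F : X → ℝ≥0∞) (u : X) : ℝ≥0∞ :=
  ∫⁻ v, K u v * F v ∂μ

/-- The kernel `K` maps `L^p(μ)` to `L^q(μ)` with norm at most `C`. -/
def KernelBound (μ : Measure X) (p q : ℝ) (C : ℝ≥0∞) (K : X → X → ℝ≥0∞) : Prop :=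
  ∀ F, Measurable F → eLpNorm' F p μ ≠ ⊤ → eLpNorm' (kernelOp μ K F) q μ ≤ C * eLpNorm' F p μ

theorem eLpNorm'_ennreal_rpow {F : X → ℝ≥0∞} {p : ℝ} (hp : 0 < p) :
    eLpNorm' F p μ ^ p = ∫⁻ v, F v ^ p ∂μ := by
  simp [eLpNorm', ← ENNReal.rpow_mul, hp.ne']

theorem ae_eq_zero_of_lintegral_rpow_eq_zero {F : X → ℝ≥0∞} {p : ℝ} (hp : 0 < p)
    (hF : Measurable F) (h : ∫⁻ v, F v ^ p ∂μ = 0) : F =ᵐ[μ] 0 := by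
  filter_upwards [(lintegral_eq_zero_iff (hF.pow_const p)).1 h] with v hv
  exact (ENNReal.rpow_eq_zero_iff_of_pos hp).1 hv

theorem ae_ne_top_of_lintegral_rpow_ne_top {F : X → ℝ≥0∞} {p : ℝ} (hp : 0 < p)
    (hF : Measurable F) (h : ∫⁻ v, F v ^ p ∂μ ≠ ⊤) : ∀ᵐ v ∂μ, F v ≠ ⊤ := by
  filter_upwards [ae_lt_top (hF.pow_const p) h] with v hv hv_top
  exact hv.ne (by rw [hv_top, ENNReal.top_rpow_of_pos hp])

theorem lintegral_rpow_indicator {F : X → ℝ≥0∞} {p : ℝ} (hp : 0 < p) {s : Set X}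
    (hs : MeasurableSet s) : ∫⁻ v, s.indicator F v ^ p ∂μ = ∫⁻ v in s, F v ^ p ∂μ := by
  rw [← lintegral_indicator hs]
  refine lintegral_congr fun v ↦ ?_
  by_cases hv : v ∈ s <;> simp [hv, hp]

theorem measurable_kernelOp [SFinite μ] {K : X → X → ℝ≥0∞}
    (hK : Measurable (Function.uncurry K)) {F : X → ℝ≥0∞} (hF : Measurable F) :
    Measurable (kernelOp μ K F) :=
  Measurable.lintegral_prod_right' (f := fun x : X × X ↦ K x.1 x.2 * F x.2)
    (hK.mul (hF.comp measurable_snd))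

theorem kernelOp_congr_ae (K : X → X → ℝ≥0∞) {F G : X → ℝ≥0∞} (h : F =ᵐ[μ] G) :
    kernelOp μ K F = kernelOp μ K G := by
  funext u
  refine lintegral_congr_ae ?_
  filter_upwards [h] with v hv
  rw [hv]

theorem kernelOp_add {K : X → X → ℝ≥0∞} (hK : Measurable (Function.uncurry K))
    {F : X → ℝ≥0∞} (hF : Measurable F) (G : X → ℝ≥0∞) :
    kernelOp μ K (F + G) = kernelOp μ K F + kernelOp μ K G := by
  funext u
  simp only [kernelOp, Pi.add_apply, mul_add]
  exact lintegral_add_left (hK.of_uncurry_left.mul hF) _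

theorem add_kernelOp {K₁ : X → X → ℝ≥0∞} (hK₁ : Measurable (Function.uncurry K₁))
    (K₂ : X → X → ℝ≥0∞) {F : X → ℝ≥0∞} (hF : Measurable F) :
    kernelOp μ (K₁ + K₂) F = kernelOp μ K₁ F + kernelOp μ K₂ F := by
  funext u
  simp only [kernelOp, Pi.add_apply, add_mul]
  exact lintegral_add_left (hK₁.of_uncurry_left.mul hF) _

theorem kernelOp_const_mul (K : X → X → ℝ≥0∞) (F : X → ℝ≥0∞) {c : ℝ≥0∞} (hc : c ≠ ⊤) (u : X) :
    kernelOp μ K (fun v ↦ c * F v) u = c * kernelOp μ K F u := by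
  simp only [kernelOp, mul_left_comm _ c]
  exact lintegral_const_mul' _ _ hc

theorem const_mul_kernelOp (K : X → X → ℝ≥0∞) (F : X → ℝ≥0∞) {c : ℝ≥0∞} (hc : c ≠ ⊤) (u : X) :
    kernelOp μ (fun u v ↦ c * K u v) F u = c * kernelOp μ K F u := by
  simp only [kernelOp, mul_assoc]
  exact lintegral_const_mul' _ _ hc

theorem eLpNorm'_ennreal_mono_ae {F G : X → ℝ≥0∞} {p : ℝ} (hp : 0 ≤ p) (h : F ≤ᵐ[μ] G) :
    eLpNorm' F p μ ≤ eLpNorm' G p μ :=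
  eLpNorm'_mono_enorm_ae hp h

theorem eLpNorm'_ennreal_const_mul {F : X → ℝ≥0∞} {p : ℝ} (hp : 0 < p) {c : ℝ≥0∞} (hc : c ≠ ⊤) :
    eLpNorm' (fun v ↦ c * F v) p μ = c * eLpNorm' F p μ := by
  simp only [eLpNorm', enorm_eq_self, ENNReal.mul_rpow_of_nonneg _ _ hp.le]
  rw [lintegral_const_mul' _ _ (ENNReal.rpow_ne_top_of_nonneg hp.le hc),
    ENNReal.mul_rpow_of_nonneg _ _ (by positivity), ← ENNReal.rpow_mul,
    mul_one_div_cancel hp.ne', ENNReal.rpow_one]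

namespace KernelBound

variable {p q : ℝ} {C : ℝ≥0∞} {K : X → X → ℝ≥0∞}

theorem of_unit_sphere (hp : 0 < p) (hq : 0 < q)
    (h : ∀ F, Measurable F → ∫⁻ v, F v ^ p ∂μ = 1 → eLpNorm' (kernelOp μ K F) q μ ≤ C) :
    KernelBound μ p q C K := by
  intro F hF hF_top
  set m := eLpNorm' F p μ with hm
  rcases eq_or_ne m 0 with hm0 | hm0
  · have hF0 : F =ᵐ[μ] 0 := ae_eq_zero_of_lintegral_rpow_eq_zero hp hF <| by
      rw [← eLpNorm'_ennreal_rpow hp, ← hm, hm0, ENNReal.zero_rpow_of_pos hp]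
    rw [kernelOp_congr_ae K hF0, hm0, mul_zero]
    simp [kernelOp, eLpNorm', hq]
  · have hinv : m⁻¹ ≠ ⊤ := ENNReal.inv_ne_top.2 hm0
    have hunit : ∫⁻ v, (m⁻¹ * F v) ^ p ∂μ = 1 := by
      rw [← eLpNorm'_ennreal_rpow hp, eLpNorm'_ennreal_const_mul hp hinv,
        ENNReal.inv_mul_cancel hm0 hF_top, ENNReal.one_rpow]
    have hle := h _ (hF.const_mul m⁻¹) hunit
    rw [funext (kernelOp_const_mul K F hinv), eLpNorm'_ennreal_const_mul hq hinv] at hle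
    calc eLpNorm' (kernelOp μ K F) q μ = m * (m⁻¹ * eLpNorm' (kernelOp μ K F) q μ) := by
          rw [← mul_assoc, ENNReal.mul_inv_cancel hm0 hF_top, one_mul]
      _ ≤ C * m := by rw [mul_comm C]; gcongr

theorem of_lintegral_le (hp : 0 < p) (hq : 0 < q)
    (h : ∀ F, Measurable F → ∫⁻ v, F v ^ p ∂μ = 1 → ∫⁻ u, kernelOp μ K F u ^ q ∂μ ≤ C) :
    KernelBound μ p q (C ^ (1 / q)) K :=
  of_unit_sphere hp hq fun F hF hF1 ↦ by
    simpa only [eLpNorm', enorm_eq_self] using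
      ENNReal.rpow_le_rpow (h F hF hF1) (one_div_nonneg.2 hq.le)

theorem mono_ae {K' : X → X → ℝ≥0∞} (hK : KernelBound μ p q C K) (hq : 0 ≤ q)
    (h : ∀ᵐ u ∂μ, ∀ᵐ v ∂μ, K' u v ≤ K u v) : KernelBound μ p q C K' := by
  refine fun F hF hF_top ↦ (eLpNorm'_ennreal_mono_ae hq ?_).trans (hK F hF hF_top)
  filter_upwards [h] with u hu
  refine lintegral_mono_ae ?_
  filter_upwards [hu] with v hv
  gcongr

theorem add [SFinite μ] {C' : ℝ≥0∞} {K' : X → X → ℝ≥0∞} (hK : KernelBound μ p q C K)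
    (hK' : KernelBound μ p q C' K') (hq : 1 ≤ q) (hKm : Measurable (Function.uncurry K))
    (hKm' : Measurable (Function.uncurry K')) : KernelBound μ p q (C + C') (K + K') := by
  intro F hF hF_top
  rw [add_kernelOp hKm K' hF, add_mul]
  exact (eLpNorm'_add_le (measurable_kernelOp hKm hF).aestronglyMeasurable
    (measurable_kernelOp hKm' hF).aestronglyMeasurable hq).trans
    (add_le_add (hK F hF hF_top) (hK' F hF hF_top))

theorem const_mul (hK : KernelBound μ p q C K) (hq : 0 < q) {c : ℝ≥0∞} (hc : c ≠ ⊤) :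
    KernelBound μ p q (c * C) fun u v ↦ c * K u v := by
  intro F hF hF_top
  rw [funext (const_mul_kernelOp K F hc), eLpNorm'_ennreal_const_mul hq hc, mul_assoc]
  gcongr
  exact hK F hF hF_top

end KernelBound

section Schur

variable {p p' : ℝ} {K : X → X → ℝ≥0∞} {w F : X → ℝ≥0∞} {c₁ c₂ : ℝ≥0∞}

theorem kernelOp_rpow_le_of_weight (hpp : p.HolderConjugate p')
    (hK : Measurable (Function.uncurry K)) (hw : Measurable w)
    (hw0 : ∀ᵐ v ∂μ, w v ≠ 0 ∧ w v ≠ ⊤) (hF : Measurable F) (u : X) :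
    kernelOp μ K F u ^ p ≤ (∫⁻ v, K u v * w v ^ (-p') ∂μ) ^ (p / p') *
      ∫⁻ v, K u v * (F v * w v) ^ p ∂μ := by
  have hp := hpp.pos
  have hp' := hpp.symm.pos
  have hKu : Measurable (K u) := hK.of_uncurry_left
  have hsplit : kernelOp μ K F u =
      ∫⁻ v, ((fun v ↦ K u v ^ (1 / p') * (w v)⁻¹) *
        fun v ↦ K u v ^ (1 / p) * (F v * w v)) v ∂μ := by
    refine lintegral_congr_ae ?_
    filter_upwards [hw0] with v hv
    have hKuv : K u v ^ (1 / p) * K u v ^ (1 / p') = K u v := by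
      rw [← ENNReal.rpow_add_of_nonneg _ _ (by positivity) (by positivity), one_div, one_div,
        hpp.inv_add_inv_eq_one, ENNReal.rpow_one]
    calc K u v * F v = K u v ^ (1 / p) * K u v ^ (1 / p') * F v * (w v * (w v)⁻¹) := by
          rw [hKuv, ENNReal.mul_inv_cancel hv.1 hv.2, mul_one]
      _ = _ := by simp only [Pi.mul_apply]; ring
  have hpow_p' : ∀ v, (K u v ^ (1 / p') * (w v)⁻¹) ^ p' = K u v * w v ^ (-p') := fun v ↦ by
    rw [ENNReal.mul_rpow_of_nonneg _ _ hp'.le, ← ENNReal.rpow_mul, one_div_mul_cancel hp'.ne',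
      ENNReal.rpow_one, ENNReal.inv_rpow, ENNReal.rpow_neg]
  have hpow_p : ∀ v, (K u v ^ (1 / p) * (F v * w v)) ^ p = K u v * (F v * w v) ^ p := fun v ↦ by
    rw [ENNReal.mul_rpow_of_nonneg _ _ hp.le, ← ENNReal.rpow_mul, one_div_mul_cancel hp.ne',
      ENNReal.rpow_one]
  have hholder := ENNReal.lintegral_mul_le_Lp_mul_Lq μ hpp.symm
    (f := fun v ↦ K u v ^ (1 / p') * (w v)⁻¹) (g := fun v ↦ K u v ^ (1 / p) * (F v * w v))
    ((hKu.pow_const (1 / p')).mul hw.inv).aemeasurable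
    ((hKu.pow_const (1 / p)).mul (hF.mul hw)).aemeasurable
  rw [← hsplit] at hholder
  simp only [hpow_p, hpow_p'] at hholder
  refine (ENNReal.rpow_le_rpow hholder hp.le).trans_eq ?_
  rw [ENNReal.mul_rpow_of_nonneg _ _ hp.le, ← ENNReal.rpow_mul, ← ENNReal.rpow_mul,
    one_div_mul_cancel hp.ne', ENNReal.rpow_one, one_div_mul_eq_div]

theorem lintegral_kernelOp_rpow_le_of_schur [SFinite μ] (hpp : p.HolderConjugate p')
    (hK : Measurable (Function.uncurry K)) (hw : Measurable w)
    (hw0 : ∀ᵐ v ∂μ, w v ≠ 0 ∧ w v ≠ ⊤)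
    (hrow : ∀ᵐ u ∂μ, ∫⁻ v, K u v * w v ^ (-p') ∂μ ≤ c₁ * w u ^ (-p'))
    (hcol : ∀ᵐ v ∂μ, ∫⁻ u, K u v * w u ^ (-p) ∂μ ≤ c₂ * w v ^ (-p)) (hF : Measurable F) :
    ∫⁻ u, kernelOp μ K F u ^ p ∂μ ≤ c₁ ^ (p / p') * c₂ * ∫⁻ v, F v ^ p ∂μ := by
  have hp := hpp.pos
  have hp' := hpp.symm.pos
  have hG : Measurable fun v ↦ (F v * w v) ^ p := (hF.mul hw).pow_const p
  have hmeas : Measurable (Function.uncurry fun u v ↦ (F v * w v) ^ p * (K u v * w u ^ (-p))) :=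
    (hG.comp measurable_snd).mul (hK.mul ((hw.pow_const _).comp measurable_fst))
  have hrow' : ∀ᵐ u ∂μ, kernelOp μ K F u ^ p ≤
      c₁ ^ (p / p') * ∫⁻ v, (F v * w v) ^ p * (K u v * w u ^ (-p)) ∂μ := by
    filter_upwards [hrow] with u hu
    calc kernelOp μ K F u ^ p
        ≤ (c₁ * w u ^ (-p')) ^ (p / p') * ∫⁻ v, K u v * (F v * w v) ^ p ∂μ := by
          refine (kernelOp_rpow_le_of_weight hpp hK hw hw0 hF u).trans ?_
          gcongr
      _ = c₁ ^ (p / p') * (w u ^ (-p) * ∫⁻ v, K u v * (F v * w v) ^ p ∂μ) := by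
          rw [ENNReal.mul_rpow_of_nonneg _ _ (by positivity), ← ENNReal.rpow_mul, neg_mul,
            mul_div_cancel₀ _ hp'.ne', mul_assoc]
      _ = _ := by
          rw [← lintegral_const_mul _ (f := fun v ↦ K u v * (F v * w v) ^ p)
            (hK.of_uncurry_left.mul hG)]
          exact congrArg _ (lintegral_congr fun v ↦ by ring)
  have hcol' : ∀ᵐ v ∂μ, ∫⁻ u, (F v * w v) ^ p * (K u v * w u ^ (-p)) ∂μ ≤ c₂ * F v ^ p := by
    filter_upwards [hcol] with v hv
    rw [lintegral_const_mul _ (f := fun u ↦ K u v * w u ^ (-p))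
      (hK.of_uncurry_right.mul (hw.pow_const _))]
    calc (F v * w v) ^ p * ∫⁻ u, K u v * w u ^ (-p) ∂μ
        ≤ (F v * w v) ^ p * (c₂ * w v ^ (-p)) := by gcongr
      _ = c₂ * F v ^ p * (w v ^ p * (w v ^ p)⁻¹) := by
          rw [ENNReal.rpow_neg, ENNReal.mul_rpow_of_nonneg _ _ hp.le]; ring
      _ ≤ c₂ * F v ^ p := mul_le_of_le_one_right' (ENNReal.mul_inv_le_one _)
  calc ∫⁻ u, kernelOp μ K F u ^ p ∂μ
      ≤ ∫⁻ u, c₁ ^ (p / p') * ∫⁻ v, (F v * w v) ^ p * (K u v * w u ^ (-p)) ∂μ ∂μ :=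
        lintegral_mono_ae hrow'
    _ = c₁ ^ (p / p') * ∫⁻ u, ∫⁻ v, (F v * w v) ^ p * (K u v * w u ^ (-p)) ∂μ ∂μ :=
        lintegral_const_mul _ hmeas.lintegral_prod_right'
    _ = c₁ ^ (p / p') * ∫⁻ v, ∫⁻ u, (F v * w v) ^ p * (K u v * w u ^ (-p)) ∂μ ∂μ := by
        rw [lintegral_lintegral_swap hmeas.aemeasurable]
    _ ≤ c₁ ^ (p / p') * ∫⁻ v, c₂ * F v ^ p ∂μ := by gcongr 1; exact lintegral_mono_ae hcol'
    _ = _ := by rw [lintegral_const_mul _ (hF.pow_const p), mul_assoc]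

end Schur

end KernelOperators

/-! ### Power growth -/

section PowerGrowth

variable {X : Type*} [MeasurableSpace X] {μ : Measure X}

/-- A nonnegative measurable function `ρ` whose sublevel sets `{ρ < R}` have measure at most
`V * R ^ Q`: a radial coordinate on a space of homogeneous dimension at most `Q`. -/
structure PowerGrowth (μ : Measure X) (V : ℝ≥0) (Q : ℝ) (ρ : X → ℝ) : Prop where
  measurable : Measurable ρ
  nonneg : ∀ x, 0 ≤ ρ x
  measure_lt_le : ∀ R, 0 < R → μ {x | ρ x < R} ≤ ENNReal.ofReal (V * R ^ Q)

theorem rpow_le_of_comparable {A x y : ℝ} (e : ℝ) (hA : 0 < A) (hx : 0 < x) (hy : 0 < y)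
    (hyx : y ≤ A * x) (hxy : x ≤ A * y) : y ^ e ≤ A ^ |e| * x ^ e := by
  rcases le_total 0 e with he | he
  · rw [abs_of_nonneg he, ← Real.mul_rpow hA.le hx.le]
    exact Real.rpow_le_rpow hy.le hyx he
  · have h := Real.rpow_le_rpow_of_nonpos hx hxy he
    rw [Real.mul_rpow hA.le hy.le] at h
    rw [abs_of_nonpos he, Real.rpow_neg hA.le, ← inv_mul_le_iff₀ (by positivity), inv_inv]
    exact h

theorem summable_zpow_rpow_mul_max_rpow {a w : ℝ} (ha : 0 < a) (haw : a < w) :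
    Summable fun k : ℤ ↦ ((2 : ℝ) ^ k) ^ a * max 1 ((2 : ℝ) ^ k) ^ (-w) := by
  have hgeom : ∀ b : ℝ, b < 0 → Summable fun k : ℕ ↦ ((2 : ℝ) ^ b) ^ k := fun b hb ↦
    summable_geometric_of_lt_one (by positivity) (Real.rpow_lt_one_of_one_lt_of_neg one_lt_two hb)
  apply Summable.of_nat_of_neg
  · refine (hgeom (a - w) (by linarith)).congr fun k ↦ ?_
    have hk : (1 : ℝ) ≤ 2 ^ k := one_le_pow₀ one_le_two
    rw [zpow_natCast, max_eq_right hk, ← Real.rpow_add (by positivity), ← Real.rpow_natCast,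
      ← Real.rpow_natCast, ← Real.rpow_mul zero_le_two, ← Real.rpow_mul zero_le_two]
    ring_nf
  · refine (hgeom (-a) (by linarith)).congr fun k ↦ ?_
    have hk : (2 : ℝ) ^ (-(k : ℤ)) ≤ 1 := by
      rw [zpow_neg, zpow_natCast]
      exact inv_le_one_of_one_le₀ (one_le_pow₀ one_le_two)
    rw [max_eq_left hk, Real.one_rpow, mul_one, ← Real.rpow_natCast, ← Real.rpow_intCast,
      ← Real.rpow_mul zero_le_two, ← Real.rpow_mul zero_le_two]
    push_cast
    ring_nf

namespace PowerGrowth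

variable {V : ℝ≥0} {Q s w : ℝ} {ρ : X → ℝ}

theorem ae_pos (hρ : PowerGrowth μ V Q ρ) (hQ : 0 < Q) : ∀ᵐ x ∂μ, 0 < ρ x := by
  have hlim : Tendsto (fun R : ℝ ↦ ENNReal.ofReal (V * R ^ Q)) (nhdsWithin 0 (Set.Ioi 0))
      (nhds 0) := by
    have hcont : Continuous fun R : ℝ ↦ ENNReal.ofReal (V * R ^ Q) :=
      ENNReal.continuous_ofReal.comp
        (continuous_const.mul (Real.continuous_rpow_const hQ.le))
    simpa [hQ.ne'] using (hcont.tendsto 0).mono_left nhdsWithin_le_nhds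
  refine ae_iff.2 (le_antisymm (ge_of_tendsto hlim ?_) zero_le)
  filter_upwards [self_mem_nhdsWithin] with R hR
  exact (measure_mono fun x hx ↦ (not_lt.1 hx).trans_lt hR).trans (hρ.measure_lt_le R hR)

theorem ae_mem_iUnion_shell (hρ : PowerGrowth μ V Q ρ) (hQ : 0 < Q) {r : ℝ} (hr : 0 < r) :
    ∀ᵐ x ∂μ, x ∈ ⋃ k : ℤ, {x | r * 2 ^ k ≤ ρ x ∧ ρ x < 2 * (r * 2 ^ k)} := by
  filter_upwards [hρ.ae_pos hQ] with x hx
  obtain ⟨k, hk_le, hk_lt⟩ := exists_mem_Ico_zpow (div_pos hx hr) (one_lt_two (α := ℝ))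
  rw [le_div_iff₀ hr] at hk_le
  rw [div_lt_iff₀ hr, zpow_add_one₀ two_ne_zero] at hk_lt
  exact Set.mem_iUnion.2 ⟨k, by linarith, by linarith⟩

theorem setLIntegral_shell_le (hρ : PowerGrowth μ V Q ρ) {r b : ℝ} (hr : 0 < r) (hb : 0 < b) :
    ∫⁻ x in {x | b ≤ ρ x ∧ ρ x < 2 * b}, ENNReal.ofReal (ρ x ^ (-s) * max r (ρ x) ^ (-w)) ∂μ ≤
      ENNReal.ofReal (2 ^ |-s| * 2 ^ |-w| * V * 2 ^ Q * (b ^ (Q - s) * max r b ^ (-w))) := by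
  set c : ℝ := 2 ^ |-s| * b ^ (-s) * (2 ^ |-w| * max r b ^ (-w)) with hc
  have hc0 : 0 ≤ c := by positivity
  have hshell : MeasurableSet {x | b ≤ ρ x ∧ ρ x < 2 * b} :=
    (measurableSet_le measurable_const hρ.measurable).inter
      (measurableSet_lt hρ.measurable measurable_const)
  calc _ ≤ ∫⁻ _ in {x | b ≤ ρ x ∧ ρ x < 2 * b}, ENNReal.ofReal c ∂μ := by
        refine setLIntegral_mono' hshell fun x ⟨hbx, hxb⟩ ↦ ENNReal.ofReal_le_ofReal ?_
        have hx : 0 < ρ x := hb.trans_le hbx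
        have hmax_le : max r (ρ x) ≤ 2 * max r b :=
          max_le (by linarith [le_max_left r b]) (by linarith [le_max_right r b])
        have hle_max : max r b ≤ 2 * max r (ρ x) :=
          max_le (by linarith [le_max_left r (ρ x)]) (by linarith [le_max_right r (ρ x)])
        exact mul_le_mul (rpow_le_of_comparable _ two_pos hb hx hxb.le (by linarith))
          (rpow_le_of_comparable _ two_pos (by positivity) (by positivity) hmax_le hle_max)
          (by positivity) (by positivity)
    _ = ENNReal.ofReal c * μ {x | b ≤ ρ x ∧ ρ x < 2 * b} := setLIntegral_const _ _
    _ ≤ ENNReal.ofReal c * ENNReal.ofReal (V * (2 * b) ^ Q) := by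
        gcongr
        exact (measure_mono fun x hx ↦ hx.2).trans (hρ.measure_lt_le _ (by positivity))
    _ = _ := by
        rw [← ENNReal.ofReal_mul hc0, hc, Real.mul_rpow two_pos.le hb.le, sub_eq_neg_add Q,
          Real.rpow_add hb]
        ring_nf

end PowerGrowth

theorem exists_lintegral_rpow_mul_max_rpow_le (μ : Measure X) (V : ℝ≥0) {Q s w : ℝ}
    (hQ : 0 < Q) (hs : s < Q) (hw : Q < s + w) :
    ∃ c : ℝ≥0, ∀ ρ, PowerGrowth μ V Q ρ → ∀ r, 0 < r →
      ∫⁻ x, ENNReal.ofReal (ρ x ^ (-s) * max r (ρ x) ^ (-w)) ∂μ ≤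
        c * ENNReal.ofReal (r ^ (Q - s - w)) := by
  set t : ℤ → ℝ := fun k ↦ ((2 : ℝ) ^ k) ^ (Q - s) * max 1 ((2 : ℝ) ^ k) ^ (-w)
  have ht : Summable t := summable_zpow_rpow_mul_max_rpow (by linarith) (by linarith)
  have ht0 : ∀ k, 0 ≤ t k := fun k ↦ by positivity
  set D : ℝ := 2 ^ |-s| * 2 ^ |-w| * V * 2 ^ Q
  have hD : 0 ≤ D := by positivity
  refine ⟨(D * ∑' k, t k).toNNReal, fun ρ hρ r hr ↦ ?_⟩
  have hscale : ∀ k : ℤ, (r * 2 ^ k) ^ (Q - s) * max r (r * 2 ^ k) ^ (-w) =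
      r ^ (Q - s - w) * t k := fun k ↦ by
    rw [show max r (r * (2 : ℝ) ^ k) = r * max 1 ((2 : ℝ) ^ k) by
        rw [mul_max_of_nonneg _ _ hr.le, mul_one],
      Real.mul_rpow hr.le (by positivity), Real.mul_rpow hr.le (by positivity),
      sub_eq_add_neg (Q - s), Real.rpow_add hr]
    ring
  calc ∫⁻ x, ENNReal.ofReal (ρ x ^ (-s) * max r (ρ x) ^ (-w)) ∂μ
      = ∫⁻ x in ⋃ k : ℤ, {x | r * 2 ^ k ≤ ρ x ∧ ρ x < 2 * (r * 2 ^ k)},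
          ENNReal.ofReal (ρ x ^ (-s) * max r (ρ x) ^ (-w)) ∂μ := by
        rw [Measure.restrict_eq_self_of_ae_mem (hρ.ae_mem_iUnion_shell hQ hr)]
    _ ≤ ∑' k : ℤ, ENNReal.ofReal (D * (r ^ (Q - s - w) * t k)) := by
        refine (lintegral_iUnion_le _ _).trans (ENNReal.tsum_le_tsum fun k ↦ ?_)
        rw [← hscale]
        exact hρ.setLIntegral_shell_le hr (by positivity)
    _ = ENNReal.ofReal (D * (∑' k, t k) * r ^ (Q - s - w)) := by
        rw [← ENNReal.ofReal_tsum_of_nonneg (fun k ↦ by have := ht0 k; positivity)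
          ((ht.mul_left _).mul_left _), tsum_mul_left, tsum_mul_left]
        ring_nf
    _ = _ := ENNReal.ofReal_mul (mul_nonneg hD (tsum_nonneg ht0))

end PowerGrowth

/-! ### Hardy kernels -/

section Hardy

variable {X : Type*} {N : X → ℝ}

/-- The Hardy-type kernel `N(u)^(-A) N(v)^(-B) max(N(u), N(v))^(-lam)`, which dominates the
Stein–Weiss kernel away from the diagonal. -/
def hardyKernel (N : X → ℝ) (A B lam : ℝ) (u v : X) : ℝ≥0∞ :=
  ENNReal.ofReal (N u ^ (-A) * N v ^ (-B) * max (N u) (N v) ^ (-lam))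

theorem hardyKernel_comm (A B lam : ℝ) (u v : X) :
    hardyKernel N A B lam u v = hardyKernel N B A lam v u := by
  rw [hardyKernel, hardyKernel, max_comm, mul_comm (N u ^ _)]

theorem hardyKernel_rpow (hN : ∀ x, 0 ≤ N x) {e : ℝ} (he : 0 ≤ e) (A B lam : ℝ) (u v : X) :
    hardyKernel N A B lam u v ^ e = hardyKernel N (A * e) (B * e) (lam * e) u v := by
  have hu := hN u
  have hv := hN v
  rw [hardyKernel, hardyKernel, ENNReal.ofReal_rpow_of_nonneg (by positivity) he,
    Real.mul_rpow (by positivity) (by positivity), Real.mul_rpow (by positivity) (by positivity),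
    ← Real.rpow_mul hu, ← Real.rpow_mul hv, ← Real.rpow_mul (by positivity)]
  simp only [neg_mul]

theorem rpow_mul_hardyKernel (a A B lam : ℝ) {u : X} (hu : 0 < N u) (v : X) :
    ENNReal.ofReal (N u ^ (-a)) * hardyKernel N A B lam u v = hardyKernel N (A + a) B lam u v := by
  rw [hardyKernel, hardyKernel, ← ENNReal.ofReal_mul (by positivity), neg_add_rev,
    Real.rpow_add hu, mul_assoc, mul_assoc, mul_assoc]

theorem hardyKernel_mul_rpow (a A B lam : ℝ) (u : X) {v : X} (hv : 0 < N v) :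
    hardyKernel N A B lam u v * ENNReal.ofReal (N v ^ (-a)) = hardyKernel N A (B + a) lam u v := by
  rw [hardyKernel_comm, mul_comm, rpow_mul_hardyKernel _ _ _ _ hv, hardyKernel_comm]

variable [MeasurableSpace X] {μ : Measure X} {V : ℝ≥0} {Q p p' q A B lam : ℝ}

theorem measurable_hardyKernel (hN : Measurable N) (A B lam : ℝ) :
    Measurable (Function.uncurry (hardyKernel N A B lam)) := by
  unfold hardyKernel Function.uncurry
  fun_prop

theorem kernelOp_hardyKernel_add (a A B lam : ℝ) (F : X → ℝ≥0∞) {u : X} (hu : 0 < N u) :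
    kernelOp μ (hardyKernel N (A + a) B lam) F u =
      ENNReal.ofReal (N u ^ (-a)) * kernelOp μ (hardyKernel N A B lam) F u := by
  simp only [kernelOp, ← rpow_mul_hardyKernel a A B lam hu, mul_assoc]
  exact lintegral_const_mul' _ _ ENNReal.ofReal_ne_top

theorem exists_lintegral_hardyKernel_le (hN : PowerGrowth μ V Q N) (hQ : 0 < Q) (hB : B < Q)
    (hBlam : Q < B + lam) : ∃ c : ℝ≥0, ∀ A u, 0 < N u →
      ∫⁻ v, hardyKernel N A B lam u v ∂μ ≤ c * ENNReal.ofReal (N u ^ (Q - A - B - lam)) := by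
  obtain ⟨c, hc⟩ := exists_lintegral_rpow_mul_max_rpow_le μ V hQ hB hBlam
  refine ⟨c, fun A u hu ↦ ?_⟩
  calc ∫⁻ v, hardyKernel N A B lam u v ∂μ
      = ∫⁻ v, ENNReal.ofReal (N u ^ (-A)) *
          ENNReal.ofReal (N v ^ (-B) * max (N u) (N v) ^ (-lam)) ∂μ := by
        refine lintegral_congr fun v ↦ ?_
        rw [← ENNReal.ofReal_mul (by positivity), hardyKernel, mul_assoc]
    _ ≤ ENNReal.ofReal (N u ^ (-A)) * (c * ENNReal.ofReal (N u ^ (Q - B - lam))) := by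
        rw [lintegral_const_mul' _ _ ENNReal.ofReal_ne_top]
        gcongr
        exact hc N hN (N u) hu
    _ = c * ENNReal.ofReal (N u ^ (Q - A - B - lam)) := by
        rw [mul_left_comm, ← ENNReal.ofReal_mul (by positivity), ← Real.rpow_add hu]
        ring_nf

theorem div_add_div_of_holderConjugate (hpp : p.HolderConjugate p') (Q : ℝ) :
    Q / p + Q / p' = Q := by
  rw [div_eq_mul_inv, div_eq_mul_inv, ← mul_add, hpp.inv_add_inv_eq_one, mul_one]

theorem exists_kernelOp_hardyKernel_le (hN : PowerGrowth μ V Q N) (hQ : 0 < Q)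
    (hpp : p.HolderConjugate p') (hB : B < Q / p') (hBlam : Q / p' < B + lam) :
    ∃ c : ℝ≥0∞, c ≠ ⊤ ∧ ∀ F, Measurable F → ∫⁻ v, F v ^ p ∂μ ≤ 1 → ∀ u, 0 < N u →
      kernelOp μ (hardyKernel N A B lam) F u ≤
        c * ENNReal.ofReal (N u ^ (Q / p' - (A + B + lam))) := by
  have hp' : 0 < p' := hpp.symm.pos
  obtain ⟨c, hc⟩ := exists_lintegral_hardyKernel_le hN hQ ((lt_div_iff₀ hp').1 hB)
    (lam := lam * p') (by rw [← add_mul]; exact (div_lt_iff₀ hp').1 hBlam)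
  refine ⟨(c : ℝ≥0∞) ^ (1 / p'), by finiteness, fun F hF hF1 u hu ↦ ?_⟩
  have hF1' : (∫⁻ v, F v ^ p ∂μ) ^ (1 / p) ≤ 1 :=
    ENNReal.rpow_le_one hF1 (one_div_nonneg.2 hpp.pos.le)
  calc kernelOp μ (hardyKernel N A B lam) F u
      ≤ (∫⁻ v, hardyKernel N A B lam u v ^ p' ∂μ) ^ (1 / p') * (∫⁻ v, F v ^ p ∂μ) ^ (1 / p) :=
        ENNReal.lintegral_mul_le_Lp_mul_Lq μ hpp.symm
          (measurable_hardyKernel hN.measurable A B lam).of_uncurry_left.aemeasurable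
          hF.aemeasurable
    _ ≤ (∫⁻ v, hardyKernel N (A * p') (B * p') (lam * p') u v ∂μ) ^ (1 / p') := by
        simp only [hardyKernel_rpow hN.nonneg hp'.le]
        exact mul_le_of_le_one_right' hF1'
    _ ≤ (c * ENNReal.ofReal (N u ^ (Q - A * p' - B * p' - lam * p'))) ^ (1 / p') :=
        ENNReal.rpow_le_rpow (hc _ u hu) (by positivity)
    _ = _ := by
        rw [ENNReal.mul_rpow_of_nonneg _ _ (by positivity),
          ENNReal.ofReal_rpow_of_pos (by positivity), ← Real.rpow_mul hu.le]
        congr 3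
        field_simp
        ring

-- Schur's test with the weight `N ^ (Q / (p p'))`.
theorem exists_lintegral_kernelOp_hardyKernel_le [SFinite μ] (hN : PowerGrowth μ V Q N)
    (hQ : 0 < Q) (hpp : p.HolderConjugate p') (hA : A < Q / p) (hB : B < Q / p')
    (hbal : A + B + lam = Q) :
    ∃ C : ℝ≥0∞, C ≠ ⊤ ∧ ∀ F, Measurable F →
      ∫⁻ u, kernelOp μ (hardyKernel N A B lam) F u ^ p ∂μ ≤ C * ∫⁻ v, F v ^ p ∂μ := by
  have hp : 0 < p := hpp.pos
  have hp' : 0 < p' := hpp.symm.pos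
  have hQpp := div_add_div_of_holderConjugate hpp Q
  obtain ⟨c₁, hc₁⟩ := exists_lintegral_hardyKernel_le (B := B + Q / p) (lam := lam) hN hQ
    (by linarith) (by linarith)
  obtain ⟨c₂, hc₂⟩ := exists_lintegral_hardyKernel_le (B := A + Q / p') (lam := lam) hN hQ
    (by linarith) (by linarith)
  set w : X → ℝ≥0∞ := fun u ↦ ENNReal.ofReal (N u ^ (Q / (p * p'))) with hw
  have hw_rpow : ∀ u, 0 < N u → ∀ e, w u ^ e = ENNReal.ofReal (N u ^ (Q / (p * p') * e)) :=
    fun u hu e ↦ by rw [hw, ENNReal.ofReal_rpow_of_pos (by positivity), ← Real.rpow_mul hu.le]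
  have hw_p' : ∀ u, 0 < N u → w u ^ (-p') = ENNReal.ofReal (N u ^ (-(Q / p))) := fun u hu ↦ by
    rw [hw_rpow u hu]; congr 2; field_simp
  have hw_p : ∀ u, 0 < N u → w u ^ (-p) = ENNReal.ofReal (N u ^ (-(Q / p'))) := fun u hu ↦ by
    rw [hw_rpow u hu]; congr 2; field_simp
  have hpos := hN.ae_pos hQ
  refine ⟨c₁ ^ (p / p') * c₂, by finiteness, fun F hF ↦ lintegral_kernelOp_rpow_le_of_schur hpp
    (measurable_hardyKernel hN.measurable A B lam) (w := w)
    (hN.measurable.pow_const _).ennreal_ofReal ?_ ?_ ?_ hF⟩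
  · filter_upwards [hpos] with u hu
    exact ⟨(ENNReal.ofReal_pos.2 (by positivity)).ne', ENNReal.ofReal_ne_top⟩
  · filter_upwards [hpos] with u hu
    rw [hw_p' u hu, show -(Q / p) = Q - A - (B + Q / p) - lam by linarith]
    refine le_trans (lintegral_mono_ae ?_) (hc₁ A u hu)
    filter_upwards [hpos] with v hv
    rw [hw_p' v hv, hardyKernel_mul_rpow _ _ _ _ _ hv]
  · filter_upwards [hpos] with v hv
    rw [hw_p v hv, show -(Q / p') = Q - B - (A + Q / p') - lam by linarith]
    refine le_trans (lintegral_mono_ae ?_) (hc₂ B v hv)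
    filter_upwards [hpos] with u hu
    rw [hw_p u hu, hardyKernel_comm, hardyKernel_mul_rpow _ _ _ _ _ hu]

-- `‖TF‖_q` is controlled by interpolating the pointwise bound `TF ≤ c N^(-Q/q)` with the weighted
-- `L^p` bound for the kernel whose left exponent is shifted by `Q/p - Q/q`.
theorem exists_kernelBound_hardyKernel [SFinite μ] (hN : PowerGrowth μ V Q N) (hQ : 0 < Q)
    (hpp : p.HolderConjugate p') (hpq : p < q) (hA : A < Q / q) (hB : B < Q / p')
    (hbal : A + B + lam = Q / p' + Q / q) :
    ∃ C : ℝ≥0∞, C ≠ ⊤ ∧ KernelBound μ p q C (hardyKernel N A B lam) := by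
  have hp : 0 < p := hpp.pos
  have hq : 0 < q := hp.trans hpq
  have hQpp := div_add_div_of_holderConjugate hpp Q
  set s := Q / p - Q / q with hs
  obtain ⟨c, hc_top, hc⟩ := exists_kernelOp_hardyKernel_le (A := A) hN hQ hpp hB
    (lam := lam) (by linarith)
  obtain ⟨C, hC_top, hC⟩ := exists_lintegral_kernelOp_hardyKernel_le (A := A + s) (lam := lam)
    hN hQ hpp (by linarith) hB (by linarith)
  have hqp : 0 ≤ q - p := by linarith
  refine ⟨(c ^ (q - p) * C) ^ (1 / q), by finiteness,
    KernelBound.of_lintegral_le hp hq fun F hF hF1 ↦ ?_⟩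
  calc ∫⁻ u, kernelOp μ (hardyKernel N A B lam) F u ^ q ∂μ
      ≤ ∫⁻ u, c ^ (q - p) * kernelOp μ (hardyKernel N (A + s) B lam) F u ^ p ∂μ := by
        refine lintegral_mono_ae ?_
        filter_upwards [hN.ae_pos hQ] with u hu
        have hpt := hc F hF hF1.le u hu
        rw [show Q / p' - (A + B + lam) = -(Q / q) by linarith] at hpt
        rw [kernelOp_hardyKernel_add s A B lam F hu]
        set I := kernelOp μ (hardyKernel N A B lam) F u
        calc I ^ q = I ^ (q - p) * I ^ p := by
              rw [← ENNReal.rpow_add_of_nonneg _ _ hqp hp.le, sub_add_cancel]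
          _ ≤ (c * ENNReal.ofReal (N u ^ (-(Q / q)))) ^ (q - p) * I ^ p := by gcongr
          _ = c ^ (q - p) * (ENNReal.ofReal (N u ^ (-s)) * I) ^ p := by
              rw [ENNReal.mul_rpow_of_nonneg _ _ hqp, ENNReal.mul_rpow_of_nonneg _ _ hp.le,
                ENNReal.ofReal_rpow_of_pos (by positivity), ← Real.rpow_mul hu.le,
                ENNReal.ofReal_rpow_of_pos (by positivity), ← Real.rpow_mul hu.le, mul_assoc]
              congr 4
              rw [hs]
              field_simp
    _ ≤ c ^ (q - p) * (C * ∫⁻ v, F v ^ p ∂μ) := by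
        rw [lintegral_const_mul' _ _ (by finiteness)]
        gcongr
        exact hC F hF
    _ = c ^ (q - p) * C := by rw [hF1, mul_one]

end Hardy

/-! ### The Hardy–Littlewood–Sobolev inequality -/

section HardyLittlewoodSobolev

variable {X : Type*}

/-- The kernel `d(u,v)^(-s) max(ρ(v), d(u,v))^(-w)`: it is `d^(-s-w)` outside the balls of radius
`ρ(v)`, with the milder singularity `d^(-s)` inside them. -/
def dampedKernel (d : X → X → ℝ) (ρ : X → ℝ) (s w : ℝ) (u v : X) : ℝ≥0∞ :=
  ENNReal.ofReal (d u v ^ (-s) * max (ρ v) (d u v) ^ (-w))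

theorem rpow_neg_mul_le_hedberg {Q p l w δ f r : ℝ} (hQ : 0 < Q) (hp : 0 < p) (hw : 0 ≤ w)
    (hδ : 0 < δ) (hf : 0 < f) (hr : 0 < r) :
    δ ^ (-l) * f ≤ max r δ ^ (-l) * f + r ^ (Q - Q / p) * (δ ^ (-l) * max r δ ^ (-Q)) +
      r ^ w * (δ ^ (-l) * max (f ^ (-(p / Q))) δ ^ (-w) * f) := by
  have hfar : 0 ≤ max r δ ^ (-l) * f := by positivity
  have hsmall : 0 ≤ r ^ (Q - Q / p) * (δ ^ (-l) * max r δ ^ (-Q)) := by positivity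
  have hlarge : 0 ≤ r ^ w * (δ ^ (-l) * max (f ^ (-(p / Q))) δ ^ (-w) * f) := by positivity
  rcases le_or_gt r δ with hrδ | hδr
  · rw [max_eq_right hrδ] at hsmall ⊢
    linarith
  rcases le_or_gt f (r ^ (-(Q / p))) with hf_le | hf_gt
  · have hbound : δ ^ (-l) * f ≤ r ^ (Q - Q / p) * (δ ^ (-l) * max r δ ^ (-Q)) := by
      rw [max_eq_left hδr.le, mul_left_comm, ← Real.rpow_add hr,
        show Q - Q / p + -Q = -(Q / p) by ring]
      exact mul_le_mul_of_nonneg_left hf_le (by positivity)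
    linarith
  · have hρr : f ^ (-(p / Q)) < r := by
      calc f ^ (-(p / Q)) < (r ^ (-(Q / p))) ^ (-(p / Q)) :=
            Real.rpow_lt_rpow_of_neg (by positivity) hf_gt
              (neg_lt_zero.2 (by positivity))
        _ = r := by
            rw [← Real.rpow_mul hr.le, neg_mul_neg, div_mul_div_cancel₀ hp.ne', div_self hQ.ne',
              Real.rpow_one]
    have hmax : r ^ (-w) ≤ max (f ^ (-(p / Q))) δ ^ (-w) :=
      Real.rpow_le_rpow_of_nonpos (by positivity) (max_le hρr.le hδr.le) (by linarith)
    have hbound : δ ^ (-l) * f ≤ r ^ w * (δ ^ (-l) * max (f ^ (-(p / Q))) δ ^ (-w) * f) := by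
      calc δ ^ (-l) * f = r ^ w * (δ ^ (-l) * r ^ (-w) * f) := by
            rw [Real.rpow_neg hr.le]; field_simp
        _ ≤ _ := by gcongr
    linarith

theorem rpow_dist_mul_le_dampedKernel {d : X → X → ℝ} {Q p l w : ℝ} (hQ : 0 < Q) (hp : 0 < p)
    (hw : 0 ≤ w) {F : X → ℝ≥0∞} {u v : X} (hv : F v ≠ ⊤) (huv : 0 < d u v) {r : ℝ} (hr : 0 < r) :
    ENNReal.ofReal (d u v ^ (-l)) * F v ≤ dampedKernel d (fun _ ↦ r) 0 l u v * F v +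
      ENNReal.ofReal (r ^ (Q - Q / p)) * dampedKernel d (fun _ ↦ r) l Q u v +
      ENNReal.ofReal (r ^ w) *
        (dampedKernel d (fun v ↦ (F v).toReal ^ (-(p / Q))) l w u v * F v) := by
  rcases eq_or_ne (F v) 0 with hv0 | hv0
  · simp [hv0]
  have hf : 0 < (F v).toReal := ENNReal.toReal_pos hv0 hv
  have h := ENNReal.ofReal_le_ofReal (rpow_neg_mul_le_hedberg (l := l) hQ hp hw huv hf hr)
  rw [ENNReal.ofReal_add (by positivity) (by positivity),
    ENNReal.ofReal_add (by positivity) (by positivity), ENNReal.ofReal_mul (by positivity),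
    ENNReal.ofReal_mul (by positivity), ENNReal.ofReal_mul (by positivity),
    ENNReal.ofReal_mul (p := r ^ w) (by positivity),
    ENNReal.ofReal_mul (q := (F v).toReal) (by positivity), ENNReal.ofReal_toReal hv] at h
  simpa only [dampedKernel, neg_zero, Real.rpow_zero, one_mul] using h

theorem ennreal_rpow_le_of_forall_radius {a c ψ : ℝ≥0∞} {Q q : ℝ} (hQ : 0 < Q) (hq : 0 < q)
    (hc : c ≠ ⊤) (h : ∀ r : ℝ, 0 < r →
      a ≤ c * ENNReal.ofReal (r ^ (-(Q / q))) + ENNReal.ofReal (r ^ (Q - Q / q)) * ψ) :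
    a ^ q ≤ (c + 1) ^ q * ψ := by
  have hc1 : (c + 1) ^ q ≠ ⊤ := by finiteness
  have hc0 : (c + 1) ^ q ≠ 0 := by simp [hq.le]
  rw [mul_comm, ← ENNReal.div_le_iff_le_mul (Or.inl hc0) (Or.inl hc1)]
  refine le_of_forall_gt_imp_ge_of_dense fun x hx ↦ ?_
  rcases eq_or_ne x ⊤ with rfl | hx_top
  · exact le_top
  lift x to ℝ≥0 using hx_top
  have hx0 : 0 < x := by exact_mod_cast (zero_le (a := ψ)).trans_lt hx
  have hx_rpow : ∀ e : ℝ, ENNReal.ofReal (((x : ℝ) ^ (-(1 / Q))) ^ e) =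
      (x : ℝ≥0∞) ^ (-(1 / Q) * e) := fun e ↦ by
    rw [← Real.rpow_mul x.coe_nonneg, ← ENNReal.ofReal_rpow_of_pos (by exact_mod_cast hx0),
      ENNReal.ofReal_coe_nnreal]
  have hx0' : (x : ℝ≥0∞) ≠ 0 := by exact_mod_cast hx0.ne'
  have ha : a ≤ (c + 1) * (x : ℝ≥0∞) ^ (1 / q) := by
    calc a ≤ c * (x : ℝ≥0∞) ^ (1 / q) + (x : ℝ≥0∞) ^ (1 / q - 1) * ψ := by
          convert h ((x : ℝ) ^ (-(1 / Q))) (by positivity) using 3 <;> rw [hx_rpow] <;> congr 1 <;>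
            field_simp
          ring
      _ ≤ c * (x : ℝ≥0∞) ^ (1 / q) + (x : ℝ≥0∞) ^ (1 / q - 1) * (x : ℝ≥0∞) ^ (1 : ℝ) := by
          rw [ENNReal.rpow_one]; gcongr
      _ = _ := by
          rw [← ENNReal.rpow_add _ _ hx0' coe_ne_top, sub_add_cancel, add_mul, one_mul]
  refine ENNReal.div_le_of_le_mul ?_
  calc a ^ q ≤ ((c + 1) * (x : ℝ≥0∞) ^ (1 / q)) ^ q := by gcongr
    _ = x * (c + 1) ^ q := by
        rw [ENNReal.mul_rpow_of_nonneg _ _ hq.le, ← ENNReal.rpow_mul, one_div_mul_cancel hq.ne',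
          ENNReal.rpow_one, mul_comm]

variable [MeasurableSpace X] {μ : Measure X} {d : X → X → ℝ} {V : ℝ≥0} {Q p p' q : ℝ}

theorem measurable_dampedKernel (hd : Measurable (Function.uncurry d)) {ρ : X → ℝ}
    (hρ : Measurable ρ) (s w : ℝ) : Measurable (Function.uncurry (dampedKernel d ρ s w)) :=
  ((hd.pow_const _).mul (((hρ.comp measurable_snd).max hd).pow_const _)).ennreal_ofReal

theorem toReal_rpow_neg_rpow_mul_self (hpp : p.HolderConjugate p') (hQ : 0 < Q) {x : ℝ≥0∞}
    (hx : x ≠ ⊤) (hx0 : x ≠ 0) :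
    ENNReal.ofReal ((x.toReal ^ (-(p / Q))) ^ (-(Q / p'))) * x = x ^ p := by
  have hpos : 0 < x.toReal := ENNReal.toReal_pos hx0 hx
  rw [← Real.rpow_mul hpos.le, neg_mul_neg, div_mul_div_cancel₀ hQ.ne', hpp.div_conj_eq_sub_one,
    ← ENNReal.ofReal_rpow_of_pos hpos, ENNReal.ofReal_toReal hx]
  nth_rewrite 2 [← ENNReal.rpow_one x]
  rw [← ENNReal.rpow_add _ _ hx0 hx, sub_add_cancel]

theorem exists_lintegral_kernelOp_dampedKernel_le [SFinite μ]
    (hd : Measurable (Function.uncurry d)) (hsymm : ∀ u v, d u v = d v u)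
    (hgrowth : ∀ u, PowerGrowth μ V Q (d u)) (hQ : 0 < Q) (hpp : p.HolderConjugate p') {s w : ℝ}
    (hs : s < Q) (hsw : s + w = Q + Q / p') :
    ∃ c : ℝ≥0, ∀ F, Measurable F → ∫⁻ v, F v ^ p ∂μ ≠ ⊤ →
      ∫⁻ u, kernelOp μ (dampedKernel d (fun v ↦ (F v).toReal ^ (-(p / Q))) s w) F u ∂μ ≤
        c * ∫⁻ v, F v ^ p ∂μ := by
  have hQp' : 0 < Q / p' := div_pos hQ hpp.symm.pos
  obtain ⟨c, hc⟩ := exists_lintegral_rpow_mul_max_rpow_le μ V hQ hs (w := w) (by linarith)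
  refine ⟨c, fun F hF hF_top ↦ ?_⟩
  set ρ : X → ℝ := fun v ↦ (F v).toReal ^ (-(p / Q))
  have hK := measurable_dampedKernel hd (hF.ennreal_toReal.pow_const (-(p / Q))) s w
  calc ∫⁻ u, kernelOp μ (dampedKernel d ρ s w) F u ∂μ
      = ∫⁻ v, ∫⁻ u, dampedKernel d ρ s w u v * F v ∂μ ∂μ :=
        lintegral_lintegral_swap (hK.mul (hF.comp measurable_snd)).aemeasurable
    _ ≤ ∫⁻ v, c * F v ^ p ∂μ := by
        refine lintegral_mono_ae ?_
        filter_upwards [ae_ne_top_of_lintegral_rpow_ne_top hpp.pos hF hF_top] with v hv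
        rcases eq_or_ne (F v) 0 with hv0 | hv0
        · simp [hv0, hpp.pos]
        have hρ : 0 < ρ v := Real.rpow_pos_of_pos (ENNReal.toReal_pos hv0 hv) _
        rw [lintegral_mul_const _ hK.of_uncurry_right,
          ← toReal_rpow_neg_rpow_mul_self hpp hQ hv hv0, ← mul_assoc]
        gcongr
        simp only [dampedKernel, hsymm _ v]
        exact (hc (d v) (hgrowth v) (ρ v) hρ).trans_eq (by congr 3; linarith)
    _ = c * ∫⁻ v, F v ^ p ∂μ := lintegral_const_mul _ (hF.pow_const p)

theorem exists_kernelOp_dampedKernel_const_le (hgrowth : ∀ u, PowerGrowth μ V Q (d u)) (hQ : 0 < Q)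
    (hpp : p.HolderConjugate p') {l : ℝ} (hl : Q / p' < l) :
    ∃ c : ℝ≥0∞, c ≠ ⊤ ∧ ∀ F, Measurable F → ∫⁻ v, F v ^ p ∂μ ≤ 1 → ∀ u (r : ℝ), 0 < r →
      kernelOp μ (dampedKernel d (fun _ ↦ r) 0 l) F u ≤ c * ENNReal.ofReal (r ^ (Q / p' - l)) := by
  have hp' : 0 < p' := hpp.symm.pos
  obtain ⟨c, hc⟩ := exists_lintegral_rpow_mul_max_rpow_le μ V hQ hQ (w := l * p')
    (by rw [zero_add]; exact (div_lt_iff₀ hp').1 hl)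
  refine ⟨(c : ℝ≥0∞) ^ (1 / p'), by finiteness, fun F hF hF1 u r hr ↦ ?_⟩
  have hF1' : (∫⁻ v, F v ^ p ∂μ) ^ (1 / p) ≤ 1 :=
    ENNReal.rpow_le_one hF1 (one_div_nonneg.2 hpp.pos.le)
  have hdu : Measurable (d u) := (hgrowth u).measurable
  have hpow : ∀ v, dampedKernel d (fun _ ↦ r) 0 l u v ^ p' =
      ENNReal.ofReal (d u v ^ (-0 : ℝ) * max r (d u v) ^ (-(l * p'))) := fun v ↦ by
    rw [dampedKernel, ENNReal.ofReal_rpow_of_nonneg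
      (mul_nonneg (Real.rpow_nonneg ((hgrowth u).nonneg v) _) (by positivity)) hp'.le]
    simp only [neg_zero, Real.rpow_zero, one_mul]
    rw [← Real.rpow_mul (by positivity), neg_mul]
  calc kernelOp μ (dampedKernel d (fun _ ↦ r) 0 l) F u
      ≤ (∫⁻ v, dampedKernel d (fun _ ↦ r) 0 l u v ^ p' ∂μ) ^ (1 / p') *
          (∫⁻ v, F v ^ p ∂μ) ^ (1 / p) :=
        ENNReal.lintegral_mul_le_Lp_mul_Lq μ hpp.symm
          (by unfold dampedKernel; fun_prop) hF.aemeasurable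
    _ ≤ (c * ENNReal.ofReal (r ^ (Q - 0 - l * p'))) ^ (1 / p') := by
        simp only [hpow]
        exact (mul_le_of_le_one_right' hF1').trans
          (ENNReal.rpow_le_rpow (hc (d u) (hgrowth u) r hr) (by positivity))
    _ = _ := by
        rw [ENNReal.mul_rpow_of_nonneg _ _ (by positivity),
          ENNReal.ofReal_rpow_of_pos (by positivity), ← Real.rpow_mul hr.le]
        congr 3
        field_simp
        ring

theorem kernelOp_rpow_dist_le_dampedKernel (hgrowth : ∀ u, PowerGrowth μ V Q (d u)) (hQ : 0 < Q)
    (hp : 0 < p) {l w : ℝ} (hw : 0 ≤ w) {F : X → ℝ≥0∞} (hF : Measurable F)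
    (hF_top : ∀ᵐ v ∂μ, F v ≠ ⊤) (u : X) {r : ℝ} (hr : 0 < r) :
    kernelOp μ (fun u v ↦ ENNReal.ofReal (d u v ^ (-l))) F u ≤
      kernelOp μ (dampedKernel d (fun _ ↦ r) 0 l) F u +
      ENNReal.ofReal (r ^ (Q - Q / p)) * ∫⁻ v, dampedKernel d (fun _ ↦ r) l Q u v ∂μ +
      ENNReal.ofReal (r ^ w) *
        kernelOp μ (dampedKernel d (fun v ↦ (F v).toReal ^ (-(p / Q))) l w) F u := by
  have hdu : Measurable (d u) := (hgrowth u).measurable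
  have hK : ∀ s w, Measurable (dampedKernel d (fun _ ↦ r) s w u) := fun s w ↦ by
    unfold dampedKernel; fun_prop
  have hKF : Measurable fun v ↦ dampedKernel d (fun _ ↦ r) 0 l u v * F v := (hK 0 l).mul hF
  have hsum : Measurable fun v ↦ dampedKernel d (fun _ ↦ r) 0 l u v * F v +
      ENNReal.ofReal (r ^ (Q - Q / p)) * dampedKernel d (fun _ ↦ r) l Q u v :=
    hKF.add ((hK l Q).const_mul _)
  simp only [kernelOp]
  rw [← lintegral_const_mul _ (hK l Q), ← lintegral_const_mul' _ _ ENNReal.ofReal_ne_top,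
    ← lintegral_add_left hKF, ← lintegral_add_left hsum]
  refine lintegral_mono_ae ?_
  filter_upwards [hF_top, (hgrowth u).ae_pos hQ] with v hv huv
  exact rpow_dist_mul_le_dampedKernel hQ hp hw hv huv hr

theorem exists_kernelOp_rpow_dist_le (hgrowth : ∀ u, PowerGrowth μ V Q (d u)) (hQ : 0 < Q)
    (hpp : p.HolderConjugate p') {l w : ℝ} (hl : Q / p' < l) (hlQ : l < Q) (hw : 0 ≤ w) :
    ∃ c : ℝ≥0∞, c ≠ ⊤ ∧ ∀ F, Measurable F → ∫⁻ v, F v ^ p ∂μ ≤ 1 → ∀ u (r : ℝ), 0 < r →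
      kernelOp μ (fun u v ↦ ENNReal.ofReal (d u v ^ (-l))) F u ≤
        c * ENNReal.ofReal (r ^ (Q / p' - l)) + ENNReal.ofReal (r ^ w) *
          kernelOp μ (dampedKernel d (fun v ↦ (F v).toReal ^ (-(p / Q))) l w) F u := by
  have hl0 : 0 < l := (div_pos hQ hpp.symm.pos).trans hl
  have hQpp := div_add_div_of_holderConjugate hpp Q
  obtain ⟨c₁, hc₁_top, hc₁⟩ := exists_kernelOp_dampedKernel_const_le hgrowth hQ hpp hl
  obtain ⟨c₂, hc₂⟩ := exists_lintegral_rpow_mul_max_rpow_le μ V hQ hlQ (w := Q) (by linarith)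
  refine ⟨c₁ + c₂, by finiteness, fun F hF hF1 u r hr ↦ ?_⟩
  have hF_top := ae_ne_top_of_lintegral_rpow_ne_top hpp.pos hF (ne_top_of_le_ne_top one_ne_top hF1)
  have hsmall : ENNReal.ofReal (r ^ (Q - Q / p)) * ∫⁻ v, dampedKernel d (fun _ ↦ r) l Q u v ∂μ ≤
      c₂ * ENNReal.ofReal (r ^ (Q / p' - l)) := by
    calc _ ≤ ENNReal.ofReal (r ^ (Q - Q / p)) * (c₂ * ENNReal.ofReal (r ^ (Q - l - Q))) := by
          gcongr
          exact hc₂ (d u) (hgrowth u) r hr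
      _ = c₂ * ENNReal.ofReal (r ^ (Q / p' - l)) := by
          rw [mul_left_comm, ← ENNReal.ofReal_mul (by positivity), ← Real.rpow_add hr]
          congr 3
          linarith
  refine (kernelOp_rpow_dist_le_dampedKernel hgrowth hQ hpp.pos hw hF hF_top u hr).trans ?_
  rw [add_mul]
  gcongr
  exact hc₁ F hF hF1 u r hr

-- Hedberg's argument: splitting at a radius `r` and optimising `r` at each point bounds the `q`-th
-- power of the potential by a potential that is integrable by Tonelli's theorem.
theorem exists_kernelBound_rpow_dist [SFinite μ] (hd : Measurable (Function.uncurry d))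
    (hsymm : ∀ u v, d u v = d v u) (hgrowth : ∀ u, PowerGrowth μ V Q (d u)) (hQ : 0 < Q)
    (hpp : p.HolderConjugate p') (hpq : p < q) {l : ℝ} (hl : l = Q / p' + Q / q) :
    ∃ C : ℝ≥0∞, C ≠ ⊤ ∧ KernelBound μ p q C fun u v ↦ ENNReal.ofReal (d u v ^ (-l)) := by
  have hp : 0 < p := hpp.pos
  have hq : 0 < q := hp.trans hpq
  have hQpp := div_add_div_of_holderConjugate hpp Q
  have hQq : 0 < Q / q := by positivity
  have hQpq : Q / q < Q / p := by gcongr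
  have hQp' : 0 < Q / p' := div_pos hQ hpp.symm.pos
  obtain ⟨c₁, hc₁_top, hc₁⟩ := exists_kernelOp_rpow_dist_le hgrowth hQ hpp (l := l)
    (w := Q - Q / q) (by linarith) (by linarith) (by linarith)
  obtain ⟨c₂, hc₂⟩ := exists_lintegral_kernelOp_dampedKernel_le hd hsymm hgrowth hQ hpp
    (s := l) (w := Q - Q / q) (by linarith) (by linarith)
  rw [show Q / p' - l = -(Q / q) by linarith] at hc₁
  refine ⟨((c₁ + 1) ^ q * c₂) ^ (1 / q), by finiteness,
    KernelBound.of_lintegral_le hp hq fun F hF hF1 ↦ ?_⟩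
  calc ∫⁻ u, kernelOp μ (fun u v ↦ ENNReal.ofReal (d u v ^ (-l))) F u ^ q ∂μ
      ≤ ∫⁻ u, (c₁ + 1) ^ q *
          kernelOp μ (dampedKernel d (fun v ↦ (F v).toReal ^ (-(p / Q))) l (Q - Q / q)) F u ∂μ :=
        lintegral_mono fun u ↦ ennreal_rpow_le_of_forall_radius hQ hq hc₁_top (hc₁ F hF hF1.le u)
    _ ≤ (c₁ + 1) ^ q * (c₂ * ∫⁻ v, F v ^ p ∂μ) := by
        rw [lintegral_const_mul' _ _ (by finiteness)]
        gcongr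
        exact hc₂ F hF (by simp [hF1])
    _ = (c₁ + 1) ^ q * c₂ := by rw [hF1, mul_one]

end HardyLittlewoodSobolev

/-! ### The Stein–Weiss inequality -/

section SteinWeiss

variable {X : Type*}

theorem rpow_mul_rpow_mul_rpow_le_of_far {x y δ A lam : ℝ} (α β : ℝ) (hx : 0 < x) (hy : 0 ≤ y)
    (hA : 0 < A) (hlam : 0 ≤ lam) (h : max x y ≤ A * δ) :
    x ^ (-α) * y ^ (-β) * δ ^ (-lam) ≤ A ^ lam * (x ^ (-α) * y ^ (-β) * max x y ^ (-lam)) := by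
  have hmax : 0 < max x y := lt_max_of_lt_left hx
  have hδ : 0 < δ := pos_of_mul_pos_right (hmax.trans_le h) hA.le
  calc x ^ (-α) * y ^ (-β) * δ ^ (-lam)
      = A ^ lam * (x ^ (-α) * y ^ (-β) * (A * δ) ^ (-lam)) := by
        rw [Real.mul_rpow hA.le hδ.le, Real.rpow_neg hA.le]
        field_simp
    _ ≤ A ^ lam * (x ^ (-α) * y ^ (-β) * max x y ^ (-lam)) := by
        gcongr A ^ lam * (x ^ (-α) * y ^ (-β) * ?_)
        exact Real.rpow_le_rpow_of_nonpos hmax h (by linarith)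

theorem rpow_mul_rpow_mul_rpow_le_of_near {x y δ A lam α β : ℝ} (hx : 0 < x) (hy : 0 < y)
    (hδ : 0 ≤ δ) (hA : 1 ≤ A) (hlam : 0 < lam) (hαβ : 0 ≤ α + β) (hδ_le : δ ≤ max x y)
    (hxA : max x y ≤ A * x) (hyA : max x y ≤ A * y) :
    x ^ (-α) * y ^ (-β) * δ ^ (-lam) ≤ A ^ |-α| * A ^ |-β| * δ ^ (-(lam + α + β)) := by
  rcases hδ.eq_or_lt with rfl | hδ
  · rw [Real.zero_rpow (by linarith), mul_zero]
    positivity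
  set m := max x y
  have hm : 0 < m := lt_max_of_lt_left hx
  have hx' : x ^ (-α) ≤ A ^ |-α| * m ^ (-α) := rpow_le_of_comparable _ (by positivity) hm hx
    ((le_max_left x y).trans (le_mul_of_one_le_left hm.le hA)) hxA
  have hy' : y ^ (-β) ≤ A ^ |-β| * m ^ (-β) := rpow_le_of_comparable _ (by positivity) hm hy
    ((le_max_right x y).trans (le_mul_of_one_le_left hm.le hA)) hyA
  have hm' : m ^ (-(α + β)) ≤ δ ^ (-(α + β)) :=
    Real.rpow_le_rpow_of_nonpos hδ hδ_le (by linarith)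
  calc x ^ (-α) * y ^ (-β) * δ ^ (-lam)
      ≤ A ^ |-α| * m ^ (-α) * (A ^ |-β| * m ^ (-β)) * δ ^ (-lam) := by gcongr
    _ = A ^ |-α| * A ^ |-β| * (m ^ (-(α + β)) * δ ^ (-lam)) := by
        rw [neg_add, Real.rpow_add hm]; ring
    _ ≤ A ^ |-α| * A ^ |-β| * (δ ^ (-(α + β)) * δ ^ (-lam)) := by gcongr
    _ = A ^ |-α| * A ^ |-β| * δ ^ (-(lam + α + β)) := by
        rw [← Real.rpow_add hδ]; ring_nf

/-- The kernel `d(e,u)^(-α) d(e,v)^(-β) d(u,v)^(-lam)`: conjugating the fractional integral by the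
weights turns the doubly weighted inequality into an unweighted bound for this kernel. -/
def steinWeissKernel (d : X → X → ℝ) (e : X) (α β lam : ℝ) (u v : X) : ℝ≥0∞ :=
  ENNReal.ofReal (d e u ^ (-α) * d e v ^ (-β) * d u v ^ (-lam))

variable [MeasurableSpace X] {μ : Measure X} {d : X → X → ℝ} {V : ℝ≥0} {Q κ : ℝ}

/-- A measurable quasi-metric (not assumed to separate points) with quasi-triangle constant `κ`
whose balls of radius `R` have measure at most `V * R ^ Q`. -/
structure QuasiMetricGrowth (μ : Measure X) (V : ℝ≥0) (Q κ : ℝ) (d : X → X → ℝ) : Prop where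
  measurable : Measurable (Function.uncurry d)
  symm : ∀ u v, d u v = d v u
  one_le : 1 ≤ κ
  triangle : ∀ u v w, d u w ≤ κ * (d u v + d v w)
  growth : ∀ u, PowerGrowth μ V Q (d u)

namespace QuasiMetricGrowth

theorem max_le_of_near (hd : QuasiMetricGrowth μ V Q κ d) {e u v : X}
    (h : 2 * κ * d u v ≤ max (d e u) (d e v)) :
    max (d e u) (d e v) ≤ 2 * κ * d e u ∧ max (d e u) (d e v) ≤ 2 * κ * d e v := by
  have hκ := hd.one_le
  have huv := hd.triangle e u v
  have hvu := hd.triangle e v u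
  rw [hd.symm v u] at hvu
  have hu : d e u ≤ κ * d e u := le_mul_of_one_le_left ((hd.growth e).nonneg u) hκ
  have hv : d e v ≤ κ * d e v := le_mul_of_one_le_left ((hd.growth e).nonneg v) hκ
  have hu0 := (hd.growth e).nonneg u
  have hv0 := (hd.growth e).nonneg v
  rcases max_choice (d e u) (d e v) with hmax | hmax <;> rw [hmax] at h ⊢ <;>
    constructor <;> linarith

theorem max_le_of_off_scale (hd : QuasiMetricGrowth μ V Q κ d) {e u v : X} {L : ℝ}
    (hL : 2 * κ ≤ L) (h : L * d e v ≤ d e u) : max (d e u) (d e v) ≤ 2 * κ * d u v := by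
  have hκ := hd.one_le
  have hv0 := (hd.growth e).nonneg v
  have hvu := hd.triangle e v u
  rw [hd.symm v u] at hvu
  have hLv : 2 * κ * d e v ≤ d e u := le_trans (by gcongr) h
  have hκv : d e v ≤ κ * d e v := le_mul_of_one_le_left hv0 hκ
  rw [max_eq_left (by linarith)]
  linarith

theorem measurable_steinWeissKernel (hd : QuasiMetricGrowth μ V Q κ d) (e : X) (α β lam : ℝ) :
    Measurable (Function.uncurry (steinWeissKernel d e α β lam)) := by
  have hde := (hd.growth e).measurable
  exact ((((hde.comp measurable_fst).pow_const _).mul ((hde.comp measurable_snd).pow_const _)).mul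
    (hd.measurable.pow_const _)).ennreal_ofReal

theorem steinWeissKernel_le_hardyKernel (hd : QuasiMetricGrowth μ V Q κ d) {e u v : X}
    {α β lam : ℝ} (hlam : 0 ≤ lam) (hu : 0 < d e u)
    (h : max (d e u) (d e v) ≤ 2 * κ * d u v) :
    steinWeissKernel d e α β lam u v ≤
      ENNReal.ofReal ((2 * κ) ^ lam) * hardyKernel (d e) α β lam u v := by
  have hκ := hd.one_le
  rw [hardyKernel, ← ENNReal.ofReal_mul (by positivity)]
  exact ENNReal.ofReal_le_ofReal (rpow_mul_rpow_mul_rpow_le_of_far α β hu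
    ((hd.growth e).nonneg v) (by positivity) hlam h)

theorem steinWeissKernel_le (hd : QuasiMetricGrowth μ V Q κ d) {e u v : X} {α β lam : ℝ}
    (hlam : 0 < lam) (hαβ : 0 ≤ α + β) (hu : 0 < d e u) (hv : 0 < d e v) :
    steinWeissKernel d e α β lam u v ≤
      ENNReal.ofReal ((2 * κ) ^ lam) * hardyKernel (d e) α β lam u v +
      ENNReal.ofReal ((2 * κ) ^ |-α| * (2 * κ) ^ |-β|) *
        ENNReal.ofReal (d u v ^ (-(lam + α + β))) := by
  have hκ := hd.one_le
  rcases le_or_gt (max (d e u) (d e v)) (2 * κ * d u v) with hfar | hnear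
  · exact (hd.steinWeissKernel_le_hardyKernel hlam.le hu hfar).trans le_self_add
  · have hduv := (hd.growth u).nonneg v
    have hduv_le : d u v ≤ 2 * κ * d u v := le_mul_of_one_le_left hduv (by linarith)
    obtain ⟨hu', hv'⟩ := hd.max_le_of_near hnear.le
    rw [← ENNReal.ofReal_mul (by positivity)]
    exact (ENNReal.ofReal_le_ofReal (rpow_mul_rpow_mul_rpow_le_of_near hu hv hduv (by linarith)
      hlam hαβ (hduv_le.trans hnear.le) hu' hv')).trans le_add_self

variable {p p' q α β lam : ℝ}

-- Away from the diagonal the kernel is dominated by a Hardy kernel; near it the two weights are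
-- comparable, and since `α + β ≥ 0` the kernel is dominated by the unweighted one of the same
-- homogeneity.
theorem exists_kernelBound_steinWeissKernel [SFinite μ] (hd : QuasiMetricGrowth μ V Q κ d) (e : X)
    (hQ : 0 < Q) (hpp : p.HolderConjugate p') (hpq : p < q) (hlam : 0 < lam) (hαβ : 0 ≤ α + β)
    (hα : α < Q / q) (hβ : β < Q / p') (hbal : α + β + lam = Q / p' + Q / q) :
    ∃ C : ℝ≥0∞, C ≠ ⊤ ∧ KernelBound μ p q C (steinWeissKernel d e α β lam) := by
  have hq1 : 1 ≤ q := (hpp.lt.trans hpq).le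
  have hq : 0 < q := by linarith
  have hpos := (hd.growth e).ae_pos hQ
  obtain ⟨C₁, hC₁_top, hC₁⟩ := exists_kernelBound_hardyKernel (hd.growth e) hQ hpp hpq hα hβ hbal
  obtain ⟨C₂, hC₂_top, hC₂⟩ := exists_kernelBound_rpow_dist hd.measurable hd.symm hd.growth hQ hpp
    hpq (l := lam + α + β) (by linarith)
  have hmeas₁ := measurable_hardyKernel (hd.growth e).measurable α β lam
  have hmeas₂ : Measurable (Function.uncurry
      fun u v ↦ ENNReal.ofReal (d u v ^ (-(lam + α + β)))) :=
    (hd.measurable.pow_const _).ennreal_ofReal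
  have hhardy := hC₁.const_mul hq (c := ENNReal.ofReal ((2 * κ) ^ lam)) ofReal_ne_top
  have hhls := hC₂.const_mul hq
    (c := ENNReal.ofReal ((2 * κ) ^ |-α| * (2 * κ) ^ |-β|)) ofReal_ne_top
  refine ⟨_, by finiteness, (hhardy.add hhls hq1 (hmeas₁.const_mul _)
    (hmeas₂.const_mul _)).mono_ae hq.le ?_⟩
  filter_upwards [hpos] with u hu
  filter_upwards [hpos] with v hv
  exact hd.steinWeissKernel_le hlam hαβ hu hv

end QuasiMetricGrowth

end SteinWeiss

/-! ### Decoupling of separated scales -/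

section Decoupling

variable {X : Type*} {N : X → ℝ}

/-- The part of the kernel `K` in which the sizes `N u` and `N v` differ by a factor of at least
`L`. -/
def offScale (N : X → ℝ) (L : ℝ) (K : X → X → ℝ≥0∞) (u v : X) : ℝ≥0∞ :=
  if L * N v ≤ N u ∨ L * N u ≤ N v then K u v else 0

theorem hardyKernel_le_of_off_scale {α β lam η L : ℝ} {u v : X} (hu : 0 < N u) (hv : 0 < N v)
    (hL : 0 < L) (hη : 0 ≤ η) (h : L * N v ≤ N u) :
    hardyKernel N α β lam u v ≤
      ENNReal.ofReal (L ^ (-η)) * hardyKernel N (α - η) (β + η) lam u v := by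
  have hratio : N u ^ (-η) * N v ^ η ≤ L ^ (-η) := by
    calc N u ^ (-η) * N v ^ η ≤ (L * N v) ^ (-η) * N v ^ η := by
          gcongr ?_ * _
          exact Real.rpow_le_rpow_of_nonpos (by positivity) h (by linarith)
      _ = L ^ (-η) := by
          rw [Real.mul_rpow hL.le hv.le, mul_assoc, ← Real.rpow_add hv, neg_add_cancel,
            Real.rpow_zero, mul_one]
  rw [hardyKernel, hardyKernel, ← ENNReal.ofReal_mul (by positivity)]
  refine ENNReal.ofReal_le_ofReal ?_
  calc N u ^ (-α) * N v ^ (-β) * max (N u) (N v) ^ (-lam)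
      = N u ^ (-η) * N v ^ η *
          (N u ^ (-(α - η)) * N v ^ (-(β + η)) * max (N u) (N v) ^ (-lam)) := by
        rw [show -α = -η + -(α - η) by ring, show -β = η + -(β + η) by ring, Real.rpow_add hu,
          Real.rpow_add hv]
        ring
    _ ≤ _ := by gcongr

variable [MeasurableSpace X] {μ : Measure X}

theorem measurable_offScale (hN : Measurable N) (L : ℝ) {K : X → X → ℝ≥0∞}
    (hK : Measurable (Function.uncurry K)) : Measurable (Function.uncurry (offScale N L K)) :=
  Measurable.ite ((measurableSet_le ((hN.comp measurable_snd).const_mul L)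
    (hN.comp measurable_fst)).union (measurableSet_le ((hN.comp measurable_fst).const_mul L)
    (hN.comp measurable_snd))) hK measurable_const

namespace QuasiMetricGrowth

variable {d : X → X → ℝ} {V : ℝ≥0} {Q κ p p' q α β lam : ℝ}

theorem offScale_steinWeissKernel_le (hd : QuasiMetricGrowth μ V Q κ d) {e u v : X} {L η : ℝ}
    (hL : 2 * κ ≤ L) (hlam : 0 ≤ lam) (hη : 0 ≤ η) (hu : 0 < d e u) (hv : 0 < d e v) :
    offScale (d e) L (steinWeissKernel d e α β lam) u v ≤
      ENNReal.ofReal ((2 * κ) ^ lam) * ENNReal.ofReal (L ^ (-η)) *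
        (hardyKernel (d e) (α - η) (β + η) lam u v +
          hardyKernel (d e) (α + η) (β - η) lam u v) := by
  have hL0 : 0 < L := by linarith [hd.one_le]
  unfold offScale
  split_ifs with h
  · rw [mul_assoc]
    rcases h with h | h
    · refine (hd.steinWeissKernel_le_hardyKernel hlam hu (hd.max_le_of_off_scale hL h)).trans ?_
      gcongr
      refine (hardyKernel_le_of_off_scale hu hv hL0 hη h).trans ?_
      gcongr
      exact le_self_add
    · have hfar : max (d e u) (d e v) ≤ 2 * κ * d u v := by
        rw [max_comm, hd.symm u v]
        exact hd.max_le_of_off_scale hL h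
      refine (hd.steinWeissKernel_le_hardyKernel hlam hu hfar).trans ?_
      gcongr
      rw [hardyKernel_comm]
      refine (hardyKernel_le_of_off_scale hv hu hL0 hη h).trans ?_
      rw [hardyKernel_comm]
      gcongr
      exact le_add_self
  · exact zero_le

-- Since `α < Q/q` and `β < Q/p'` are strict, the weights can be shifted by a small `η`; a factor
-- `L` between the scales of `u` and `v` then gains `L ^ (-η)`.
theorem exists_kernelBound_offScale_steinWeissKernel [SFinite μ]
    (hd : QuasiMetricGrowth μ V Q κ d) (e : X) (hQ : 0 < Q) (hpp : p.HolderConjugate p')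
    (hpq : p < q) (hlam : 0 ≤ lam) (hα : α < Q / q) (hβ : β < Q / p')
    (hbal : α + β + lam = Q / p' + Q / q) {ε : ℝ≥0∞} (hε : ε ≠ 0) :
    ∃ L : ℝ, 1 < L ∧ KernelBound μ p q ε (offScale (d e) L (steinWeissKernel d e α β lam)) := by
  have hq1 : 1 ≤ q := (hpp.lt.trans hpq).le
  have hq : 0 < q := by linarith
  have hpos := (hd.growth e).ae_pos hQ
  have hmeas := measurable_hardyKernel (hd.growth e).measurable
  obtain ⟨η, hη, hη_lt⟩ := exists_between (lt_min (sub_pos.2 hα) (sub_pos.2 hβ))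
  obtain ⟨hηα, hηβ⟩ := lt_min_iff.1 hη_lt
  obtain ⟨C₁, hC₁_top, hC₁⟩ := exists_kernelBound_hardyKernel (A := α - η) (B := β + η)
    (lam := lam) (hd.growth e) hQ hpp hpq (by linarith) (by linarith) (by linarith)
  obtain ⟨C₂, hC₂_top, hC₂⟩ := exists_kernelBound_hardyKernel (A := α + η) (B := β - η)
    (lam := lam) (hd.growth e) hQ hpp hpq (by linarith) (by linarith) (by linarith)
  have hC := hC₁.add hC₂ hq1 (hmeas _ _ _) (hmeas _ _ _)
  have hlim : Tendsto (fun L : ℝ ↦ ENNReal.ofReal ((2 * κ) ^ lam) * ENNReal.ofReal (L ^ (-η)) *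
      (C₁ + C₂)) atTop (nhds 0) := by
    have h := ENNReal.tendsto_ofReal (tendsto_rpow_neg_atTop hη)
    rw [ENNReal.ofReal_zero] at h
    simpa using ENNReal.Tendsto.mul_const (ENNReal.Tendsto.const_mul h (Or.inr ofReal_ne_top))
      (Or.inr (by finiteness : C₁ + C₂ ≠ ⊤))
  obtain ⟨L, hLε, hL1, hLκ⟩ := ((hlim.eventually_le_const (pos_iff_ne_zero.2 hε)).and
    ((eventually_gt_atTop 1).and (eventually_ge_atTop (2 * κ)))).exists
  refine ⟨L, hL1, fun F hF hF_top ↦ le_trans ?_ (mul_le_mul_left hLε _)⟩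
  refine (hC.const_mul hq (by finiteness)).mono_ae hq.le ?_ F hF hF_top
  filter_upwards [hpos] with u hu
  filter_upwards [hpos] with v hv
  exact hd.offScale_steinWeissKernel_le hLκ hlam hη.le hu hv

end QuasiMetricGrowth

end Decoupling

/-! ### Near-extremal functions do not split -/

section Concentration

variable {X : Type*} [MeasurableSpace X] {μ : Measure X}
  {p q : ℝ} {C ε : ℝ≥0∞} {K K' : X → X → ℝ≥0∞} {F : X → ℝ≥0∞} {s t U : Set X}

theorem eLpNorm'_ennreal_indicator (hp : 0 < p) (hs : MeasurableSet s) :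
    eLpNorm' (s.indicator F) p μ = (∫⁻ v in s, F v ^ p ∂μ) ^ (1 / p) := by
  simp only [eLpNorm', enorm_eq_self, lintegral_rpow_indicator hp hs]

theorem KernelBound.lintegral_rpow_indicator_le (hK : KernelBound μ p q C K) (hp : 0 < p)
    (hq : 0 < q) (hF : Measurable F) (hF_top : ∫⁻ v, F v ^ p ∂μ ≠ ⊤) (hs : MeasurableSet s) :
    ∫⁻ u, kernelOp μ K (s.indicator F) u ^ q ∂μ ≤
      C ^ q * (∫⁻ v in s, F v ^ p ∂μ) ^ (q / p) := by
  have hs_top : ∫⁻ v in s, F v ^ p ∂μ ≠ ⊤ :=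
    ne_top_of_le_ne_top hF_top (setLIntegral_le_lintegral s _)
  have h := hK _ (hF.indicator hs) (by rw [eLpNorm'_ennreal_indicator hp hs]; finiteness)
  rw [eLpNorm'_ennreal_indicator hp hs] at h
  calc ∫⁻ u, kernelOp μ K (s.indicator F) u ^ q ∂μ
      ≤ (C * (∫⁻ v in s, F v ^ p ∂μ) ^ (1 / p)) ^ q := by
        rw [← eLpNorm'_ennreal_rpow hq]; gcongr
    _ = C ^ q * (∫⁻ v in s, F v ^ p ∂μ) ^ (q / p) := by
        rw [ENNReal.mul_rpow_of_nonneg _ _ hq.le, ← ENNReal.rpow_mul, one_div_mul_eq_div]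

theorem kernelOp_indicator_le {u : X} (h : ∀ v ∈ s, K u v ≤ K' u v) :
    kernelOp μ K (s.indicator F) u ≤ kernelOp μ K' F u :=
  lintegral_mono fun v ↦ by
    by_cases hv : v ∈ s
    · simpa [hv] using mul_le_mul_left (h v hv) (F v)
    · simp [hv]

theorem kernelOp_eq_add_add (hK : Measurable (Function.uncurry K)) (hF : Measurable F)
    (hs : MeasurableSet s) (ht : MeasurableSet t) (hst : Disjoint s t) :
    kernelOp μ K F = kernelOp μ K (s.indicator F) + kernelOp μ K (t.indicator F) +
      kernelOp μ K ((s ∪ t)ᶜ.indicator F) := by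
  have hunion : s.indicator F + t.indicator F = (s ∪ t).indicator F :=
    (Set.indicator_union_of_disjoint hst F).symm
  rw [← kernelOp_add hK (hF.indicator hs), ← kernelOp_add hK ((hF.indicator hs).add
    (hF.indicator ht)), hunion, Set.indicator_self_add_compl]

theorem kernelOp_le_of_split (hK : Measurable (Function.uncurry K)) (hF : Measurable F)
    (hs : MeasurableSet s) (ht : MeasurableSet t) (hst : Disjoint s t)
    (hKs : ∀ u ∈ U, ∀ v ∈ s, K u v ≤ K' u v) (hKt : ∀ u ∉ U, ∀ v ∈ t, K u v ≤ K' u v) :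
    kernelOp μ K F ≤ Uᶜ.indicator (kernelOp μ K (s.indicator F)) +
      U.indicator (kernelOp μ K (t.indicator F)) + kernelOp μ K' F +
      kernelOp μ K ((s ∪ t)ᶜ.indicator F) := by
  intro u
  rw [kernelOp_eq_add_add hK hF hs ht hst]
  simp only [Pi.add_apply]
  gcongr ?_ + _
  by_cases hu : u ∈ U
  · simpa [hu, add_comm (kernelOp μ K (t.indicator F) u)] using
      add_le_add_left (kernelOp_indicator_le (μ := μ) (F := F) (hKs u hu))
        (kernelOp μ K (t.indicator F) u)
  · simpa [hu] using
      add_le_add le_rfl (kernelOp_indicator_le (μ := μ) (F := F) (hKt u hu))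

theorem lintegral_indicator_compl_add_indicator_rpow_le {f g : X → ℝ≥0∞} (hf : Measurable f)
    (U : Set X) : ∫⁻ x, (Uᶜ.indicator f + U.indicator g) x ^ q ∂μ ≤
      ∫⁻ x, f x ^ q ∂μ + ∫⁻ x, g x ^ q ∂μ := by
  rw [← lintegral_add_left (hf.pow_const q)]
  refine lintegral_mono fun x ↦ ?_
  by_cases hx : x ∈ U <;> simp [hx]

theorem KernelBound.eLpNorm'_kernelOp_le_of_split [SFinite μ] (hC : KernelBound μ p q C K)
    (hε : KernelBound μ p q ε K') (hp : 0 < p) (hq : 1 ≤ q) (hK : Measurable (Function.uncurry K))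
    (hK' : Measurable (Function.uncurry K')) (hF : Measurable F) (hF1 : ∫⁻ v, F v ^ p ∂μ ≤ 1)
    (hs : MeasurableSet s) (ht : MeasurableSet t) (hU : MeasurableSet U) (hst : Disjoint s t)
    (hKs : ∀ u ∈ U, ∀ v ∈ s, K u v ≤ K' u v) (hKt : ∀ u ∉ U, ∀ v ∈ t, K u v ≤ K' u v) :
    eLpNorm' (kernelOp μ K F) q μ ≤
      C * ((∫⁻ v in s, F v ^ p ∂μ) ^ (q / p) + (∫⁻ v in t, F v ^ p ∂μ) ^ (q / p)) ^ (1 / q) + ε +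
        C * (∫⁻ v in (s ∪ t)ᶜ, F v ^ p ∂μ) ^ (1 / p) := by
  have hq0 : 0 < q := by linarith
  have hF_top : ∫⁻ v, F v ^ p ∂μ ≠ ⊤ := ne_top_of_le_ne_top one_ne_top hF1
  have hF_norm : eLpNorm' F p μ ≤ 1 := ENNReal.rpow_le_one hF1 (one_div_nonneg.2 hp.le)
  have hst_meas := (hs.union ht).compl
  have hfs := measurable_kernelOp (μ := μ) hK (hF.indicator hs)
  have hft := measurable_kernelOp (μ := μ) hK (hF.indicator ht)
  have hmain := (hfs.indicator hU.compl).add (hft.indicator hU)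
  have hF' := measurable_kernelOp (μ := μ) hK' hF
  refine (eLpNorm'_ennreal_mono_ae hq0.le (Eventually.of_forall
    (kernelOp_le_of_split hK hF hs ht hst hKs hKt))).trans ?_
  refine (eLpNorm'_add_le (hmain.add hF').aestronglyMeasurable
    (measurable_kernelOp hK (hF.indicator hst_meas)).aestronglyMeasurable hq).trans ?_
  refine add_le_add ((eLpNorm'_add_le hmain.aestronglyMeasurable hF'.aestronglyMeasurable
    hq).trans (add_le_add ?_ ?_)) ?_
  · have hmass := (lintegral_indicator_compl_add_indicator_rpow_le (μ := μ)
      (g := kernelOp μ K (t.indicator F)) hfs U).trans (add_le_add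
      (hC.lintegral_rpow_indicator_le hp hq0 hF hF_top hs)
      (hC.lintegral_rpow_indicator_le hp hq0 hF hF_top ht))
    rw [← mul_add] at hmass
    refine (ENNReal.rpow_le_rpow hmass (one_div_nonneg.2 hq0.le)).trans_eq ?_
    rw [ENNReal.mul_rpow_of_nonneg _ _ (by positivity), ← ENNReal.rpow_mul,
      mul_one_div_cancel hq0.ne', ENNReal.rpow_one]
  · exact (hε F hF (ne_top_of_le_ne_top one_ne_top hF_norm)).trans (mul_le_of_le_one_right' hF_norm)
  · rw [← eLpNorm'_ennreal_indicator hp hst_meas]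
    refine hC _ (hF.indicator hst_meas) (ne_top_of_le_ne_top one_ne_top ?_)
    exact (eLpNorm'_ennreal_mono_ae hp.le
      (Eventually.of_forall (Set.indicator_le_self _ F))).trans hF_norm

theorem ennreal_rpow_add_rpow_le {a b δ : ℝ≥0∞} {r : ℝ} (hr : 1 ≤ r) (ha : δ ≤ a) (hb : δ ≤ b)
    (hab : a + b ≤ 1) : a ^ r + b ^ r ≤ (1 - δ) ^ (r - 1) := by
  have hδ : δ ≠ ⊤ := ne_top_of_le_ne_top one_ne_top (ha.trans (le_self_add.trans hab))
  have ha' : a ≤ 1 - δ :=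
    ENNReal.le_sub_of_add_le_right hδ ((add_le_add le_rfl hb).trans hab)
  have hb' : b ≤ 1 - δ :=
    ENNReal.le_sub_of_add_le_left hδ ((add_le_add ha le_rfl).trans hab)
  have hpow : ∀ x ≤ 1 - δ, x ^ r ≤ x * (1 - δ) ^ (r - 1) := fun x hx ↦ by
    calc x ^ r = x ^ (1 : ℝ) * x ^ (r - 1) := by
          rw [← ENNReal.rpow_add_of_nonneg _ _ zero_le_one (by linarith), add_sub_cancel]
      _ ≤ x * (1 - δ) ^ (r - 1) := by
          rw [ENNReal.rpow_one]
          gcongr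
  calc a ^ r + b ^ r ≤ a * (1 - δ) ^ (r - 1) + b * (1 - δ) ^ (r - 1) :=
        add_le_add (hpow a ha') (hpow b hb')
    _ = (a + b) * (1 - δ) ^ (r - 1) := (add_mul _ _ _).symm
    _ ≤ (1 - δ) ^ (r - 1) := mul_le_of_le_one_left' hab

theorem exists_setLIntegral_le_inv {f : X → ℝ≥0∞} {M : ℕ} (hM : M ≠ 0) {A : ℕ → Set X}
    (hA : ∀ k, MeasurableSet (A k)) (hdisj : Pairwise (Function.onFun Disjoint A))
    (hf : ∫⁻ x, f x ∂μ ≤ 1) : ∃ k < M, ∫⁻ x in A k, f x ∂μ ≤ (M : ℝ≥0∞)⁻¹ := by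
  by_contra! h
  have hsum : ∑ _k ∈ Finset.range M, (M : ℝ≥0∞)⁻¹ < ∑ k ∈ Finset.range M, ∫⁻ x in A k, f x ∂μ :=
    ENNReal.sum_lt_sum_of_nonempty (by simpa using hM) fun k hk ↦ h k (Finset.mem_range.1 hk)
  rw [← lintegral_biUnion_finset (fun i _ j _ hij ↦ hdisj hij) (fun k _ ↦ hA k), Finset.sum_const,
    Finset.card_range, nsmul_eq_mul,
    ENNReal.mul_inv_cancel (by exact_mod_cast hM) (by simp)] at hsum
  exact hsum.not_ge ((setLIntegral_le_lintegral _ _).trans hf)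

theorem exists_pos_mul_add_add_mul_lt {θ : ℝ≥0∞} (hC0 : C ≠ 0) (hC_top : C ≠ ⊤) (hθ : θ < 1) :
    ∃ ε : ℝ≥0∞, ε ≠ 0 ∧ C * θ + ε + C * ε < C := by
  have hlt : C * θ < C := by simpa using ENNReal.mul_lt_mul_right hC0 hC_top hθ
  have hlim : Tendsto (fun k : ℕ ↦ C * θ + (k : ℝ≥0∞)⁻¹ + C * (k : ℝ≥0∞)⁻¹) atTop
      (nhds (C * θ + 0 + C * 0)) :=
    (tendsto_const_nhds.add ENNReal.tendsto_inv_nat_nhds_zero).add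
      (ENNReal.Tendsto.const_mul ENNReal.tendsto_inv_nat_nhds_zero (Or.inr hC_top))
  simp only [add_zero, mul_zero] at hlim
  obtain ⟨k, hk⟩ := (hlim.eventually_lt_const hlt).exists
  exact ⟨_, by simp, hk⟩

variable {N : X → ℝ}

theorem exists_annulus_setLIntegral_le_inv (hN : Measurable N) {f : X → ℝ≥0∞}
    (hf : ∫⁻ x, f x ∂μ ≤ 1) {L : ℝ} (hL : 1 ≤ L) {M : ℕ} (hM : M ≠ 0) :
    ∃ k < M, ∫⁻ x in ({x | N x < L ^ (2 * k)} ∪ {x | L ^ (2 * (k + 1)) ≤ N x})ᶜ, f x ∂μ ≤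
      (M : ℝ≥0∞)⁻¹ := by
  have hmono : Monotone fun k : ℕ ↦ L ^ (2 * k) := fun i j hij ↦
    pow_le_pow_right₀ hL (by omega)
  obtain ⟨k, hk, hle⟩ := exists_setLIntegral_le_inv hM
    (A := fun k ↦ N ⁻¹' Set.Ico (L ^ (2 * k)) (L ^ (2 * (k + 1))))
    (fun k ↦ hN measurableSet_Ico)
    (fun i j hij ↦ (hmono.pairwise_disjoint_on_Ico_succ hij).preimage N) hf
  refine ⟨k, hk, le_of_eq_of_le ?_ hle⟩
  congr 2
  ext x
  simp

theorem KernelBound.exists_radial_split [SFinite μ] (hC : KernelBound μ p q C K) {L : ℝ}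
    (hoff : KernelBound μ p q ε (offScale N L K)) (hL : 1 ≤ L) (hp : 0 < p) (hq : 1 ≤ q)
    (hN : Measurable N) (hK : Measurable (Function.uncurry K)) (hF : Measurable F)
    (hF1 : ∫⁻ v, F v ^ p ∂μ ≤ 1) {M : ℕ} (hM : M ≠ 0) (hMε : (M : ℝ≥0∞)⁻¹ ≤ ε ^ p) :
    ∃ k < M, eLpNorm' (kernelOp μ K F) q μ ≤
      C * ((∫⁻ v in {v | N v < L ^ (2 * k)}, F v ^ p ∂μ) ^ (q / p) +
        (∫⁻ v in {v | L ^ (2 * (k + 1)) ≤ N v}, F v ^ p ∂μ) ^ (q / p)) ^ (1 / q) + ε + C * ε := by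
  obtain ⟨k, hkM, hgap⟩ := exists_annulus_setLIntegral_le_inv hN hF1 hL hM
  have hL0 : 0 < L := by linarith
  have hmono : L ^ (2 * k) ≤ L ^ (2 * (k + 1)) := pow_le_pow_right₀ hL (by omega)
  refine ⟨k, hkM, (hC.eLpNorm'_kernelOp_le_of_split hoff hp hq hK (measurable_offScale hN L hK)
    hF hF1 (U := {u | L ^ (2 * k + 1) ≤ N u}) (measurableSet_lt hN measurable_const)
    (measurableSet_le measurable_const hN) (measurableSet_le measurable_const hN)
    (Set.disjoint_left.2 fun v hvs hvt ↦ (hvs.trans_le hmono).not_ge hvt) ?_ ?_).trans ?_⟩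
  · intro u (hu : L ^ (2 * k + 1) ≤ N u) v (hv : N v < L ^ (2 * k))
    have : L * N v ≤ N u :=
      (mul_le_mul_of_nonneg_left hv.le hL0.le).trans (by rwa [← pow_succ'])
    simp [offScale, this]
  · intro u hu v (hv : L ^ (2 * (k + 1)) ≤ N v)
    rw [Set.mem_ofPred_eq, not_le] at hu
    have : L * N u ≤ N v :=
      (mul_le_mul_of_nonneg_left hu.le hL0.le).trans (by rwa [← pow_succ'])
    simp [offScale, this]
  · gcongr
    calc _ ≤ (ε ^ p) ^ (1 / p) := by gcongr; exact hgap.trans hMε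
      _ = ε := by rw [← ENNReal.rpow_mul, mul_one_div_cancel hp.ne', ENNReal.rpow_one]

theorem KernelBound.eLpNorm'_kernelOp_le_of_mass_near_far [SFinite μ]
    (hC : KernelBound μ p q C K) {L : ℝ} (hoff : KernelBound μ p q ε (offScale N L K))
    (hL : 1 ≤ L) (hp : 0 < p) (hq : 1 ≤ q) (hpq : p ≤ q) (hN : Measurable N)
    (hK : Measurable (Function.uncurry K)) (hF : Measurable F) (hF1 : ∫⁻ v, F v ^ p ∂μ ≤ 1)
    {M : ℕ} (hM : M ≠ 0) (hMε : (M : ℝ≥0∞)⁻¹ ≤ ε ^ p) {δ : ℝ≥0∞}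
    (hnear : δ ≤ ∫⁻ v in {v | N v < 1}, F v ^ p ∂μ)
    (hfar : δ ≤ ∫⁻ v in {v | L ^ (2 * M) ≤ N v}, F v ^ p ∂μ) :
    eLpNorm' (kernelOp μ K F) q μ ≤ C * ((1 - δ) ^ (q / p - 1)) ^ (1 / q) + ε + C * ε := by
  obtain ⟨k, hkM, hle⟩ := hC.exists_radial_split hoff hL hp hq hN hK hF hF1 hM hMε
  have hnear_subset : {v | N v < 1} ⊆ {v | N v < L ^ (2 * k)} :=
    fun v hv ↦ hv.trans_le (one_le_pow₀ hL)
  have hfar_subset : {v | L ^ (2 * M) ≤ N v} ⊆ {v | L ^ (2 * (k + 1)) ≤ N v} :=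
    fun v hv ↦ (pow_le_pow_right₀ hL (by omega)).trans hv
  have hdisj : Disjoint {v | N v < L ^ (2 * k)} {v | L ^ (2 * (k + 1)) ≤ N v} :=
    Set.disjoint_left.2 fun v hvs hvt ↦
      (hvs.trans_le (pow_le_pow_right₀ hL (by omega))).not_ge hvt
  refine hle.trans ?_
  gcongr
  refine ennreal_rpow_add_rpow_le ((one_le_div hp).2 hpq)
    (hnear.trans (lintegral_mono_set hnear_subset)) (hfar.trans (lintegral_mono_set hfar_subset)) ?_
  rw [← lintegral_union (measurableSet_le measurable_const hN) hdisj]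
  exact (setLIntegral_le_lintegral _ _).trans hF1

-- If a near-extremal `F` had mass both near the origin and far away, an annulus carrying little
-- mass would separate the two parts; up to `ε` they would not interact, and the strict convexity
-- of `x ↦ x ^ (q / p)` would push the norm strictly below `C`.
theorem KernelBound.exists_lt_forall_mass_far_le [SFinite μ] (hC : KernelBound μ p q C K)
    (hoff : ∀ ε : ℝ≥0∞, ε ≠ 0 → ∃ L > 1, KernelBound μ p q ε (offScale N L K)) (hC0 : C ≠ 0)
    (hC_top : C ≠ ⊤) (hp : 0 < p) (hq : 1 ≤ q) (hpq : p < q) (hN : Measurable N)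
    (hK : Measurable (Function.uncurry K)) {m δ : ℝ≥0∞} (hm : m ≠ 0) (hδ : δ ≠ 0) :
    ∃ c < C, ∃ R : ℝ, ∀ F, Measurable F → ∫⁻ v, F v ^ p ∂μ ≤ 1 →
      m ≤ ∫⁻ v in {v | N v < 1}, F v ^ p ∂μ → c < eLpNorm' (kernelOp μ K F) q μ →
      ∫⁻ v in {v | R ≤ N v}, F v ^ p ∂μ ≤ δ := by
  have hθ : ((1 - min m δ) ^ (q / p - 1)) ^ (1 / q) < 1 := by
    refine ENNReal.rpow_lt_one (ENNReal.rpow_lt_one (ENNReal.sub_lt_self one_ne_top one_ne_zero ?_)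
      (sub_pos.2 ((one_lt_div hp).2 hpq))) (by positivity)
    simp [hm, hδ]
  obtain ⟨ε, hε, hlt⟩ := exists_pos_mul_add_add_mul_lt hC0 hC_top hθ
  obtain ⟨L, hL, hoff⟩ := hoff ε hε
  obtain ⟨M, hM⟩ := ENNReal.exists_inv_nat_lt (a := min (ε ^ p) 1) (by simp [hε, hp.le, hp])
  have hM0 : M ≠ 0 := by
    rintro rfl
    simp at hM
  refine ⟨_, hlt, L ^ (2 * M), fun F hF hF1 hnear hlarge ↦ ?_⟩
  by_contra! hfar
  exact hlarge.not_ge (hC.eLpNorm'_kernelOp_le_of_mass_near_far hoff hL.le hp hq hpq.le hN hK hF hF1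
    hM0 (hM.le.trans (min_le_left _ _)) ((min_le_left _ _).trans hnear)
    ((min_le_right _ _).trans hfar.le))

theorem eLpNorm'_kernelOp_ne_zero [SFinite μ] [NeZero μ] (hp : 0 < p) (hq : 0 < q)
    (hK : Measurable (Function.uncurry K)) (hK0 : ∀ᵐ u ∂μ, ∀ᵐ v ∂μ, K u v ≠ 0)
    (hF : Measurable F) (hF0 : ∫⁻ v, F v ^ p ∂μ ≠ 0) : eLpNorm' (kernelOp μ K F) q μ ≠ 0 := by
  intro h
  have hzero := ae_eq_zero_of_lintegral_rpow_eq_zero hq (measurable_kernelOp hK hF)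
    (by rw [← eLpNorm'_ennreal_rpow hq, h, ENNReal.zero_rpow_of_pos hq])
  obtain ⟨u, hu, hKu⟩ := (hzero.and hK0).exists
  have hKF := (lintegral_eq_zero_iff (hK.of_uncurry_left.mul hF)).1 hu
  have hF_zero : F =ᵐ[μ] 0 := by
    filter_upwards [hKF, hKu] with v hv hKv using (mul_eq_zero.1 hv).resolve_left hKv
  refine hF0 ((lintegral_congr_ae (g := fun _ ↦ 0) ?_).trans lintegral_zero)
  filter_upwards [hF_zero] with v hv
  simp [hv, hp]

end Concentration

/-! ### Tightness and vague limits -/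

section Tightness

variable {X : Type*} [MeasurableSpace X] {f : X → ℝ} {K : Set X}

theorem measure_le_one_and_ofReal_le_of_integral_mem_Icc {μ : Measure X} {c : ℝ} (hc : 0 < c)
    (hf_meas : Measurable f) (hf_mem : ∀ x, f x ∈ Set.Icc 0 1) (hfK : Set.EqOn f 1 K)
    (h_mem : ∫ x, f x ∂μ ∈ Set.Icc c 1) : μ K ≤ 1 ∧ ENNReal.ofReal c ≤ μ Set.univ := by
  -- `μ` need not be locally finite: `f` is integrable because its Bochner integral is not `0`.
  have hf_int : Integrable f μ := by
    by_contra h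
    rw [integral_undef h] at h_mem
    exact hc.not_ge h_mem.1
  have hlint : ∫⁻ x, ENNReal.ofReal (f x) ∂μ = ENNReal.ofReal (∫ x, f x ∂μ) :=
    (ofReal_integral_eq_lintegral_ofReal hf_int (ae_of_all _ fun x ↦ (hf_mem x).1)).symm
  constructor
  · calc μ K ≤ μ {x | 1 ≤ ENNReal.ofReal (f x)} :=
          measure_mono fun x hx ↦ by simp [hfK hx]
      _ ≤ ∫⁻ x, ENNReal.ofReal (f x) ∂μ := by
          simpa using mul_meas_ge_le_lintegral hf_meas.ennreal_ofReal 1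
      _ ≤ 1 := by simpa [hlint] using h_mem.2
  · calc ENNReal.ofReal c ≤ ∫⁻ x, ENNReal.ofReal (f x) ∂μ := by
          rw [hlint]; exact ENNReal.ofReal_le_ofReal h_mem.1
      _ ≤ ∫⁻ _, 1 ∂μ := lintegral_mono fun x ↦ by simpa using (hf_mem x).2
      _ = μ Set.univ := lintegral_one

variable [TopologicalSpace X]

theorem isTightMeasureSet_range_of_eventually_cofinite {ι : Type*} {ν : ι → Measure X}
    (hν : ∀ i, IsTightMeasureSet {ν i})
    (h : ∀ ε : ℝ≥0∞, 0 < ε → ∃ K, IsCompact K ∧ ∀ᶠ i in cofinite, ν i Kᶜ ≤ ε) :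
    IsTightMeasureSet (Set.range ν) := by
  simp only [isTightMeasureSet_iff_exists_isCompact_measure_compl_le, Set.mem_singleton_iff,
    forall_eq, Set.forall_mem_range] at hν ⊢
  intro ε hε
  obtain ⟨K, hK, hKν⟩ := h ε hε
  choose A hA hAν using fun i ↦ hν i ε hε
  refine ⟨K ∪ ⋃ i ∈ {i | ¬ ν i Kᶜ ≤ ε}, A i, hK.union (hKν.isCompact_biUnion fun i _ ↦ hA i),
    fun i ↦ ?_⟩
  by_cases hi : ν i Kᶜ ≤ ε
  · exact (measure_mono (Set.compl_subset_compl.2 Set.subset_union_left)).trans hi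
  · refine (measure_mono (Set.compl_subset_compl.2 ?_)).trans (hAν i)
    exact (Set.subset_biUnion_of_mem (u := A) hi).trans Set.subset_union_right

variable [OpensMeasurableSpace X] [T2Space X]

theorem integral_mem_Icc_of_eqOn_one {ν : Measure X} [IsProbabilityMeasure ν] {ε : ℝ}
    (hε : 0 ≤ ε) (hf : Continuous f) (hf_supp : HasCompactSupport f)
    (hf_mem : ∀ x, f x ∈ Set.Icc 0 1) (hK : IsCompact K) (hfK : Set.EqOn f 1 K)
    (hKν : ν Kᶜ ≤ ENNReal.ofReal ε) : ∫ x, f x ∂ν ∈ Set.Icc (1 - ε) 1 := by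
  have hf_int : Integrable f ν := hf.integrable_of_hasCompactSupport hf_supp
  constructor
  · have hreal : ν.real Kᶜ ≤ ε := ENNReal.toReal_le_of_le_ofReal hε hKν
    have hcompl := probReal_compl_eq_one_sub (μ := ν) hK.measurableSet
    calc 1 - ε ≤ ν.real K := by linarith
      _ = ∫ x, K.indicator 1 x ∂ν := (integral_indicator_one hK.measurableSet).symm
      _ ≤ ∫ x, f x ∂ν := by
        refine integral_mono ((integrable_const 1).indicator hK.measurableSet) hf_int
          (Set.indicator_le' (fun x hx ↦ (hfK hx).ge) fun x _ ↦ (hf_mem x).1)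
  · calc ∫ x, f x ∂ν ≤ ∫ _, (1 : ℝ) ∂ν :=
          integral_mono hf_int (integrable_const 1) fun x ↦ (hf_mem x).2
      _ = 1 := by simp

variable [LocallyCompactSpace X] {ι : Type*} {l : Filter ι} [l.NeBot] {ν : ι → Measure X}
  [∀ i, IsProbabilityMeasure (ν i)] {μ : Measure X}

theorem measure_le_one_and_ofReal_le_of_isTight_of_vague (hν : IsTightMeasureSet (Set.range ν))
    (hlim : ∀ f : X → ℝ, Continuous f → HasCompactSupport f →
      Tendsto (fun i ↦ ∫ x, f x ∂ν i) l (nhds (∫ x, f x ∂μ)))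
    (hK : IsCompact K) {ε : ℝ} (hε : 0 < ε) (hε1 : ε < 1) :
    μ K ≤ 1 ∧ ENNReal.ofReal (1 - ε) ≤ μ Set.univ := by
  obtain ⟨A, hA, hAν⟩ := isTightMeasureSet_iff_exists_isCompact_measure_compl_le.1 hν
    (ENNReal.ofReal ε) (ENNReal.ofReal_pos.2 hε)
  obtain ⟨f, hfKA, -, hf_supp, hf_mem⟩ :=
    exists_continuous_one_zero_of_isCompact (hK.union hA) isClosed_empty (Set.disjoint_empty _)
  refine measure_le_one_and_ofReal_le_of_integral_mem_Icc (sub_pos.2 hε1) f.measurable hf_mem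
    (hfKA.mono Set.subset_union_left) (isClosed_Icc.mem_of_tendsto (hlim f f.continuous hf_supp)
    (Eventually.of_forall fun i ↦ ?_))
  exact integral_mem_Icc_of_eqOn_one hε.le f.continuous hf_supp hf_mem hA
    (hfKA.mono Set.subset_union_right) (hAν _ (Set.mem_range_self i))

theorem measure_univ_eq_one_of_isTight_of_vague [SigmaCompactSpace X]
    (hν : IsTightMeasureSet (Set.range ν))
    (hlim : ∀ f : X → ℝ, Continuous f → HasCompactSupport f →
      Tendsto (fun i ↦ ∫ x, f x ∂ν i) l (nhds (∫ x, f x ∂μ))) : μ Set.univ = 1 := by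
  refine le_antisymm ?_ (ENNReal.le_of_forall_pos_le_add fun ε hε _ ↦ ?_)
  · have hmono : Monotone (compactCovering X) := fun _ _ h ↦ compactCovering_subset X h
    rw [← iUnion_compactCovering X, hmono.measure_iUnion]
    exact iSup_le fun k ↦ (measure_le_one_and_ofReal_le_of_isTight_of_vague hν hlim
      (isCompact_compactCovering X k) one_half_pos one_half_lt_one).1
  · obtain hε1 | hε1 := lt_or_ge (ε : ℝ) 1
    · have h := (measure_le_one_and_ofReal_le_of_isTight_of_vague hν hlim
        isCompact_empty (NNReal.coe_pos.2 hε) hε1).2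
      rw [ENNReal.ofReal_sub _ ε.coe_nonneg] at h
      simpa [tsub_le_iff_right] using h
    · exact le_add_left (by exact_mod_cast hε1)

end Tightness

/-! ### The Heisenberg group -/

section Heisenberg

variable {n : ℕ}

theorem znorm_eq_norm (z : Fin n → ℂ) : znorm z = ‖WithLp.toLp 2 z‖ := by
  simp [znorm, EuclideanSpace.norm_eq, Complex.normSq_eq_norm_sq]

theorem znorm_nonneg (z : Fin n → ℂ) : 0 ≤ znorm z := Real.sqrt_nonneg _

theorem znorm_add_le (z w : Fin n → ℂ) : znorm (z + w) ≤ znorm z + znorm w := by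
  simp only [znorm_eq_norm, WithLp.toLp_add]
  exact norm_add_le _ _

theorem norm_le_znorm (z : Fin n → ℂ) : ‖z‖ ≤ znorm z := by
  rw [znorm_eq_norm]
  exact (pi_norm_le_iff_of_nonneg (norm_nonneg _)).2 (PiLp.norm_apply_le (WithLp.toLp 2 z))

theorem abs_im_sum_mul_conj_le (z w : Fin n → ℂ) :
    |(∑ j, z j * (starRingEnd ℂ) (w j)).im| ≤ znorm z * znorm w := by
  have hinner : ∑ j, z j * (starRingEnd ℂ) (w j) =
      inner ℂ (WithLp.toLp 2 w) (WithLp.toLp 2 z) := by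
    simp [PiLp.inner_apply]
  rw [hinner, znorm_eq_norm, znorm_eq_norm, mul_comm]
  exact (Complex.abs_im_le_norm _).trans (norm_inner_le_norm _ _)

theorem Hnorm_nonneg (u : Hn n) : 0 ≤ Hnorm u := by
  unfold Hnorm
  positivity

theorem Hnorm_pow_four (u : Hn n) : Hnorm u ^ 4 = znorm u.1 ^ 4 + u.2 ^ 2 := by
  rw [Hnorm, ← Real.rpow_natCast, ← Real.rpow_mul (by positivity)]
  norm_num

theorem continuous_Hnorm : Continuous (Hnorm : Hn n → ℝ) := by
  have hz : Continuous (znorm : (Fin n → ℂ) → ℝ) := by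
    unfold znorm
    fun_prop
  exact (((hz.comp continuous_fst).pow 4).add (continuous_snd.pow 2)).rpow_const
    fun _ ↦ Or.inr (by norm_num)

theorem znorm_fst_le_Hnorm (u : Hn n) : znorm u.1 ≤ Hnorm u := by
  refine le_of_pow_le_pow_left₀ four_ne_zero (Hnorm_nonneg u) ?_
  rw [Hnorm_pow_four]
  exact le_add_of_nonneg_right (sq_nonneg _)

theorem abs_snd_le_Hnorm_sq (u : Hn n) : |u.2| ≤ Hnorm u ^ 2 := by
  refine abs_le_of_sq_le_sq ?_ (sq_nonneg _)
  rw [← pow_mul, Hnorm_pow_four]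
  exact le_add_of_nonneg_left (pow_nonneg (znorm_nonneg _) 4)

theorem norm_le_max_Hnorm (u : Hn n) : ‖u‖ ≤ max (Hnorm u) (Hnorm u ^ 2) :=
  max_le_max ((norm_le_znorm u.1).trans (znorm_fst_le_Hnorm u)) (abs_snd_le_Hnorm_sq u)

theorem isCompact_setOf_Hnorm_le (R : ℝ) : IsCompact {u : Hn n | Hnorm u ≤ R} := by
  refine (isCompact_closedBall (0 : Hn n) (max R (R ^ 2))).of_isClosed_subset
    (isClosed_le continuous_Hnorm continuous_const) fun u (hu : Hnorm u ≤ R) ↦ ?_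
  rw [mem_closedBall_zero_iff]
  exact (norm_le_max_Hnorm u).trans (max_le_max hu (pow_le_pow_left₀ (Hnorm_nonneg u) hu 2))

theorem abs_snd_Hmul_le (u w : Hn n) : |(Hmul u w).2| ≤ (Hnorm u + Hnorm w) ^ 2 := by
  have him : |(∑ j, u.1 j * (starRingEnd ℂ) (w.1 j)).im| ≤ Hnorm u * Hnorm w :=
    (abs_im_sum_mul_conj_le u.1 w.1).trans (mul_le_mul (znorm_fst_le_Hnorm u)
      (znorm_fst_le_Hnorm w) (znorm_nonneg _) (Hnorm_nonneg u))
  calc |(Hmul u w).2|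
      ≤ |u.2| + |w.2| + 2 * |(∑ j, u.1 j * (starRingEnd ℂ) (w.1 j)).im| := by
        simpa only [Hmul, abs_mul, abs_two] using abs_add_three u.2 w.2 (2 * _)
    _ ≤ Hnorm u ^ 2 + Hnorm w ^ 2 + 2 * (Hnorm u * Hnorm w) := by
        gcongr <;> exact abs_snd_le_Hnorm_sq _
    _ = (Hnorm u + Hnorm w) ^ 2 := by ring

theorem Hnorm_Hmul_le (u w : Hn n) : Hnorm (Hmul u w) ≤ 2 * (Hnorm u + Hnorm w) := by
  have hsum : 0 ≤ Hnorm u + Hnorm w := add_nonneg (Hnorm_nonneg u) (Hnorm_nonneg w)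
  have hz : znorm (Hmul u w).1 ≤ Hnorm u + Hnorm w :=
    (znorm_add_le _ _).trans (add_le_add (znorm_fst_le_Hnorm u) (znorm_fst_le_Hnorm w))
  refine le_of_pow_le_pow_left₀ four_ne_zero (by positivity) ?_
  calc Hnorm (Hmul u w) ^ 4 = znorm (Hmul u w).1 ^ 4 + |(Hmul u w).2| ^ 2 := by
        rw [Hnorm_pow_four, sq_abs]
    _ ≤ (Hnorm u + Hnorm w) ^ 4 + ((Hnorm u + Hnorm w) ^ 2) ^ 2 := by
        gcongr
        exacts [znorm_nonneg _, abs_snd_Hmul_le u w]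
    _ ≤ (2 * (Hnorm u + Hnorm w)) ^ 4 := by nlinarith [pow_nonneg hsum 4]

theorem Hnorm_Hinv (u : Hn n) : Hnorm (Hinv u) = Hnorm u := by
  simp [Hnorm, Hinv, znorm]

theorem Hinv_Hmul_Hinv (u v : Hn n) : Hinv (Hmul (Hinv u) v) = Hmul (Hinv v) u := by
  have hsum : (∑ j, v.1 j * (starRingEnd ℂ) (u.1 j)).im =
      -(∑ j, u.1 j * (starRingEnd ℂ) (v.1 j)).im := by
    rw [← Complex.conj_im, map_sum]
    simp [mul_comm]
  ext1
  · simp [Hinv, Hmul]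
  · simp only [Hinv, Hmul, Pi.neg_apply, neg_mul, Finset.sum_neg_distrib, Complex.neg_im, hsum]
    ring

theorem Hmul_Hinv_Hmul_Hinv (u v w : Hn n) :
    Hmul (Hmul (Hinv u) v) (Hmul (Hinv v) w) = Hmul (Hinv u) w := by
  have hsum : (∑ j, (-u.1 j + v.1 j) * (starRingEnd ℂ) (-v.1 j + w.1 j)).im =
      (∑ j, -u.1 j * (starRingEnd ℂ) (w.1 j)).im - (∑ j, -u.1 j * (starRingEnd ℂ) (v.1 j)).im -
        (∑ j, -v.1 j * (starRingEnd ℂ) (w.1 j)).im := by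
    simp only [Complex.im_sum, ← Finset.sum_sub_distrib]
    refine Finset.sum_congr rfl fun j _ ↦ ?_
    simp only [Complex.mul_im, Complex.add_re, Complex.add_im, Complex.neg_re, Complex.neg_im,
      Complex.conj_re, Complex.conj_im]
    ring
  ext1
  · simp [Hinv, Hmul]
  · simp only [Hinv, Hmul, Pi.add_apply, Pi.neg_apply, hsum]
    ring

theorem Hdist_comm (u v : Hn n) : Hdist u v = Hdist v u := by
  rw [Hdist, Hdist, ← Hinv_Hmul_Hinv u v, Hnorm_Hinv]

theorem Hdist_triangle (u v w : Hn n) : Hdist u w ≤ 2 * (Hdist u v + Hdist v w) := by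
  rw [Hdist, ← Hmul_Hinv_Hmul_Hinv u v w]
  exact Hnorm_Hmul_le _ _

theorem Hdist_zero (v : Hn n) : Hdist 0 v = Hnorm v := by
  simp [Hdist, Hmul, Hinv]

theorem continuous_Hdist : Continuous fun x : Hn n × Hn n ↦ Hdist x.1 x.2 := by
  refine continuous_Hnorm.comp ?_
  unfold Hmul Hinv
  fun_prop

theorem measurePreserving_Hmul (a : Hn n) : MeasurePreserving (Hmul a) := by
  refine (measurePreserving_add_left (volume : Measure (Fin n → ℂ)) a.1).skew_product
    (g := fun z t ↦ a.2 + t + 2 * (∑ j, a.1 j * (starRingEnd ℂ) (z j)).im) ?_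
    (ae_of_all _ fun z ↦ ?_)
  · exact Continuous.measurable (by fun_prop)
  · refine Eq.trans ?_
      (map_add_left_eq_self volume (a.2 + 2 * (∑ j, a.1 j * (starRingEnd ℂ) (z j)).im))
    congr 1
    funext t
    ring

theorem volume_Hnorm_lt_le {R : ℝ} (hR : 0 ≤ R) : volume {v : Hn n | Hnorm v < R} ≤
    ENNReal.ofReal ((NNReal.pi ^ n * 2 : ℝ≥0) * R ^ (2 * (n : ℝ) + 2)) := by
  have hsub : {v : Hn n | Hnorm v < R} ⊆
      (Set.univ.pi fun _ : Fin n ↦ Metric.ball (0 : ℂ) R) ×ˢ Metric.ball (0 : ℝ) (R ^ 2) := by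
    refine fun v (hv : Hnorm v < R) ↦ ⟨fun j _ ↦ ?_, ?_⟩
    · rw [mem_ball_zero_iff]
      exact ((norm_le_pi_norm v.1 j).trans ((norm_le_znorm v.1).trans
        (znorm_fst_le_Hnorm v))).trans_lt hv
    · rw [mem_ball_zero_iff, Real.norm_eq_abs]
      exact (abs_snd_le_Hnorm_sq v).trans_lt (pow_lt_pow_left₀ hv (Hnorm_nonneg v) two_ne_zero)
  have hdisc : ENNReal.ofReal R ^ 2 * (NNReal.pi : ℝ≥0∞) = ENNReal.ofReal (R ^ 2 * NNReal.pi) := by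
    rw [ENNReal.ofReal_mul (by positivity), ENNReal.ofReal_pow hR, ENNReal.ofReal_coe_nnreal]
  have hpow : R ^ (2 * (n : ℝ) + 2) = R ^ (2 * n + 2) := by exact_mod_cast Real.rpow_natCast R _
  refine (measure_mono hsub).trans_eq ?_
  rw [Measure.volume_eq_prod, Measure.prod_prod, volume_pi_pi]
  simp only [Complex.volume_ball, Finset.prod_const, Finset.card_univ, Fintype.card_fin,
    Real.volume_ball, hdisc]
  rw [← ENNReal.ofReal_pow (by positivity), ← ENNReal.ofReal_mul (by positivity), hpow]
  congr 1
  push_cast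
  ring

variable (n) in
theorem quasiMetricGrowth_Hdist : QuasiMetricGrowth (volume : Measure (Hn n)) (NNReal.pi ^ n * 2)
    (2 * n + 2) 2 Hdist where
  measurable := continuous_Hdist.measurable
  symm := Hdist_comm
  one_le := one_le_two
  triangle := Hdist_triangle
  growth u :=
    { measurable := continuous_Hdist.measurable.of_uncurry_left
      nonneg := fun v ↦ Hnorm_nonneg _
      measure_lt_le := fun R hR ↦ by
        have hball := (measurePreserving_Hmul (Hinv u)).measure_preimage
          (measurableSet_lt continuous_Hnorm.measurable
            (measurable_const (a := R))).nullMeasurableSet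
        exact hball.trans_le (volume_Hnorm_lt_le hR.le) }

theorem ae_Hdist_pos (u : Hn n) : ∀ᵐ v : Hn n, 0 < Hdist u v :=
  ((quasiMetricGrowth_Hdist n).growth u).ae_pos (by positivity)

theorem ae_Hnorm_pos : ∀ᵐ v : Hn n, 0 < Hnorm v := by
  simpa only [Hdist_zero] using ae_Hdist_pos (0 : Hn n)

end Heisenberg

/-! ### The best Stein–Weiss constant -/

section BestConstant

/-- The weighted function `g |·|^β`, as a `[0, ∞]`-valued function; it turns the weighted norm of
`g` into an unweighted one. -/
def weightedFun {n : ℕ} (β : ℝ) (g : Hn n → ℝ) (v : Hn n) : ℝ≥0∞ :=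
  ENNReal.ofReal (g v * Hnorm v ^ β)

theorem eLpNorm_ofReal_eq_eLpNorm' {X : Type*} [MeasurableSpace X] {μ : Measure X} {p : ℝ}
    (hp : 0 < p) {h : X → ℝ} (h0 : ∀ v, 0 ≤ h v) :
    eLpNorm h (ENNReal.ofReal p) μ = eLpNorm' (fun v ↦ ENNReal.ofReal (h v)) p μ := by
  rw [eLpNorm_eq_eLpNorm' (by simpa using hp) ofReal_ne_top, ENNReal.toReal_ofReal hp.le]
  simp only [eLpNorm', Real.enorm_eq_ofReal (h0 _), enorm_eq_self]

variable {n : ℕ} {p q α β lam : ℝ} {g : Hn n → ℝ} {C : ℝ≥0∞}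

theorem measurable_weightedFun (hg : Measurable g) : Measurable (weightedFun β g) :=
  (hg.mul (continuous_Hnorm.measurable.pow_const β)).ennreal_ofReal

theorem eLpNorm_weighted_eq (hp : 0 < p) (hg : ∀ v, 0 ≤ g v) :
    eLpNorm (fun v ↦ g v * Hnorm v ^ β) (ENNReal.ofReal p) volume =
      eLpNorm' (weightedFun β g) p volume :=
  eLpNorm_ofReal_eq_eLpNorm' hp fun v ↦ mul_nonneg (hg v) (Real.rpow_nonneg (Hnorm_nonneg v) β)

theorem lintegral_weightedFun_rpow_eq_one (hp : 0 < p) (hg : ∀ v, 0 ≤ g v)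
    (h : eLpNorm (fun v ↦ g v * Hnorm v ^ β) (ENNReal.ofReal p) volume = 1) :
    ∫⁻ v, weightedFun β g v ^ p = 1 := by
  rw [← eLpNorm'_ennreal_rpow hp, ← eLpNorm_weighted_eq hp hg, h, ENNReal.one_rpow]

theorem steinWeissKernel_Hdist_zero (u v : Hn n) : steinWeissKernel Hdist 0 α β lam u v =
    ENNReal.ofReal (Hnorm u ^ (-α) * Hnorm v ^ (-β) * Hdist u v ^ (-lam)) := by
  simp only [steinWeissKernel, Hdist_zero]

theorem Ilam_nonneg (hg : ∀ v, 0 ≤ g v) (u : Hn n) : 0 ≤ Ilam lam g u :=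
  integral_nonneg fun v ↦ div_nonneg (hg v) (Real.rpow_nonneg (Hnorm_nonneg _) _)

theorem Ilam_eq_toReal_lintegral (hgm : Measurable g) (hg : ∀ v, 0 ≤ g v) (u : Hn n) :
    Ilam lam g u = (∫⁻ v, ENNReal.ofReal (g v / Hdist u v ^ lam)).toReal :=
  integral_eq_lintegral_of_nonneg_ae
    (ae_of_all _ fun v ↦ div_nonneg (hg v) (Real.rpow_nonneg (Hnorm_nonneg _) _))
    (hgm.div (continuous_Hdist.measurable.of_uncurry_left.pow_const lam)).aestronglyMeasurable

theorem kernelOp_steinWeissKernel_weightedFun (u : Hn n) :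
    kernelOp volume (steinWeissKernel Hdist 0 α β lam) (weightedFun β g) u =
      ENNReal.ofReal (Hnorm u ^ (-α)) * ∫⁻ v, ENNReal.ofReal (g v / Hdist u v ^ lam) := by
  have hu := Real.rpow_nonneg (Hnorm_nonneg u) (-α)
  rw [← lintegral_const_mul' _ _ ofReal_ne_top]
  refine lintegral_congr_ae ?_
  filter_upwards [ae_Hnorm_pos] with v hv
  have hcancel : Hnorm v ^ (-β) * Hnorm v ^ β = 1 := by
    rw [← Real.rpow_add hv, neg_add_cancel, Real.rpow_zero]
  have hd : 0 ≤ Hdist u v := Hnorm_nonneg _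
  rw [steinWeissKernel_Hdist_zero, weightedFun, ← ENNReal.ofReal_mul (by positivity),
    ← ENNReal.ofReal_mul hu, Real.rpow_neg hd, div_eq_mul_inv]
  congr 1
  linear_combination (Hnorm u ^ (-α) * (Hdist u v ^ lam)⁻¹ * g v) * hcancel

theorem ofReal_Ilam_mul_le (hgm : Measurable g) (hg : ∀ v, 0 ≤ g v) (u : Hn n) :
    ENNReal.ofReal (Ilam lam g u * Hnorm u ^ (-α)) ≤
      kernelOp volume (steinWeissKernel Hdist 0 α β lam) (weightedFun β g) u := by
  rw [kernelOp_steinWeissKernel_weightedFun, ENNReal.ofReal_mul (Ilam_nonneg hg u),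
    Ilam_eq_toReal_lintegral hgm hg, mul_comm]
  gcongr
  exact ENNReal.ofReal_toReal_le

theorem ofReal_Ilam_mul_eq (hgm : Measurable g) (hg : ∀ v, 0 ≤ g v) {u : Hn n} (hu : 0 < Hnorm u)
    (hfin : kernelOp volume (steinWeissKernel Hdist 0 α β lam) (weightedFun β g) u ≠ ⊤) :
    ENNReal.ofReal (Ilam lam g u * Hnorm u ^ (-α)) =
      kernelOp volume (steinWeissKernel Hdist 0 α β lam) (weightedFun β g) u := by
  rw [kernelOp_steinWeissKernel_weightedFun] at hfin ⊢
  have hweight : ENNReal.ofReal (Hnorm u ^ (-α)) ≠ 0 := by simpa using Real.rpow_pos_of_pos hu _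
  have hlint : ∫⁻ v, ENNReal.ofReal (g v / Hdist u v ^ lam) ≠ ⊤ := fun h ↦
    hfin (by rw [h, ENNReal.mul_top hweight])
  rw [ENNReal.ofReal_mul (Ilam_nonneg hg u), Ilam_eq_toReal_lintegral hgm hg,
    ENNReal.ofReal_toReal hlint, mul_comm]

theorem eLpNorm_Ilam_le (hq : 0 < q) (hgm : Measurable g) (hg : ∀ v, 0 ≤ g v) :
    eLpNorm (fun u ↦ Ilam lam g u * Hnorm u ^ (-α)) (ENNReal.ofReal q) volume ≤
      eLpNorm' (kernelOp volume (steinWeissKernel Hdist 0 α β lam) (weightedFun β g)) q volume := by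
  rw [eLpNorm_ofReal_eq_eLpNorm' hq fun u ↦
    mul_nonneg (Ilam_nonneg hg u) (Real.rpow_nonneg (Hnorm_nonneg u) _)]
  exact eLpNorm'_ennreal_mono_ae hq.le (ae_of_all _ (ofReal_Ilam_mul_le hgm hg))

theorem eLpNorm_Ilam_eq (hq : 0 < q) (hgm : Measurable g) (hg : ∀ v, 0 ≤ g v)
    (hfin : eLpNorm' (kernelOp volume (steinWeissKernel Hdist 0 α β lam) (weightedFun β g)) q
      volume ≠ ⊤) :
    eLpNorm (fun u ↦ Ilam lam g u * Hnorm u ^ (-α)) (ENNReal.ofReal q) volume =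
      eLpNorm' (kernelOp volume (steinWeissKernel Hdist 0 α β lam) (weightedFun β g)) q volume := by
  have hmeas := measurable_kernelOp (μ := volume)
    ((quasiMetricGrowth_Hdist n).measurable_steinWeissKernel 0 α β lam)
    (measurable_weightedFun (β := β) hgm)
  have hae := ae_ne_top_of_lintegral_rpow_ne_top hq hmeas
    (by rw [← eLpNorm'_ennreal_rpow hq]; finiteness)
  rw [eLpNorm_ofReal_eq_eLpNorm' hq fun u ↦
    mul_nonneg (Ilam_nonneg hg u) (Real.rpow_nonneg (Hnorm_nonneg u) _)]
  refine eLpNorm'_congr_ae ?_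
  filter_upwards [hae, ae_Hnorm_pos] with u hu hu_pos using ofReal_Ilam_mul_eq hgm hg hu_pos hu

theorem eLpNorm'_kernelOp_weightedFun_le (hC : KernelBound volume p q C
    (steinWeissKernel (Hdist (n := n)) 0 α β lam)) (hp : 0 < p) (hgm : Measurable g)
    (hg : ∀ v, 0 ≤ g v)
    (hg1 : eLpNorm (fun v ↦ g v * Hnorm v ^ β) (ENNReal.ofReal p) volume = 1) :
    eLpNorm' (kernelOp volume (steinWeissKernel Hdist 0 α β lam) (weightedFun β g)) q volume ≤
      C := by
  rw [eLpNorm_weighted_eq hp hg] at hg1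
  simpa [hg1] using hC _ (measurable_weightedFun hgm) (hg1.trans_ne one_ne_top)

theorem SWbestConst_le (hC : KernelBound volume p q C
    (steinWeissKernel (Hdist (n := n)) 0 α β lam)) (hp : 0 < p) (hq : 0 < q) :
    SWbestConst n p q lam α β ≤ C := by
  refine sSup_le ?_
  rintro c ⟨g, hgm, hg, hg1, rfl⟩
  exact (eLpNorm_Ilam_le hq hgm hg).trans (eLpNorm'_kernelOp_weightedFun_le hC hp hgm hg hg1)

theorem eLpNorm'_kernelOp_weightedFun_le_SWbestConst (hC : KernelBound volume p q C
    (steinWeissKernel (Hdist (n := n)) 0 α β lam)) (hC_top : C ≠ ⊤) (hp : 0 < p) (hq : 0 < q)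
    (hgm : Measurable g) (hg : ∀ v, 0 ≤ g v)
    (hg1 : eLpNorm (fun v ↦ g v * Hnorm v ^ β) (ENNReal.ofReal p) volume = 1) :
    eLpNorm' (kernelOp volume (steinWeissKernel Hdist 0 α β lam) (weightedFun β g)) q volume ≤
      SWbestConst n p q lam α β := by
  rw [← eLpNorm_Ilam_eq hq hgm hg
    (ne_top_of_le_ne_top hC_top (eLpNorm'_kernelOp_weightedFun_le hC hp hgm hg hg1))]
  exact le_sSup ⟨g, hgm, hg, hg1, rfl⟩

theorem weightedFun_toReal_mul_rpow_neg_ae_eq {F : Hn n → ℝ≥0∞} (hF : ∀ᵐ v, F v ≠ ⊤) :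
    weightedFun β (fun v ↦ (F v).toReal * Hnorm v ^ (-β)) =ᵐ[volume] F := by
  filter_upwards [hF, ae_Hnorm_pos] with v hv hv_pos
  rw [weightedFun, mul_assoc, ← Real.rpow_add hv_pos, neg_add_cancel, Real.rpow_zero, mul_one,
    ENNReal.ofReal_toReal hv]

theorem kernelBound_SWbestConst (hC : KernelBound volume p q C
    (steinWeissKernel (Hdist (n := n)) 0 α β lam)) (hC_top : C ≠ ⊤) (hp : 0 < p) (hq : 0 < q) :
    KernelBound volume p q (SWbestConst n p q lam α β)
      (steinWeissKernel (Hdist (n := n)) 0 α β lam) := by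
  refine .of_unit_sphere hp hq fun F hF hF1 ↦ ?_
  have hFg := weightedFun_toReal_mul_rpow_neg_ae_eq (β := β)
    (ae_ne_top_of_lintegral_rpow_ne_top hp hF (hF1.trans_ne one_ne_top))
  have hg_meas : Measurable fun v ↦ (F v).toReal * Hnorm v ^ (-β) :=
    hF.ennreal_toReal.mul (continuous_Hnorm.measurable.pow_const _)
  have hg_nonneg : ∀ v, 0 ≤ (F v).toReal * Hnorm v ^ (-β) := fun v ↦
    mul_nonneg toReal_nonneg (Real.rpow_nonneg (Hnorm_nonneg v) _)
  rw [← kernelOp_congr_ae _ hFg]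
  refine eLpNorm'_kernelOp_weightedFun_le_SWbestConst hC hC_top hp hq hg_meas hg_nonneg ?_
  rw [eLpNorm_weighted_eq hp hg_nonneg, eLpNorm'_congr_ae hFg]
  simp [eLpNorm', hF1]

theorem SWbestConst_ne_zero (hC : KernelBound volume p q C
    (steinWeissKernel (Hdist (n := n)) 0 α β lam)) (hC_top : C ≠ ⊤) (hp : 0 < p) (hq : 0 < q)
    (hgm : Measurable g) (hg : ∀ v, 0 ≤ g v)
    (hg1 : eLpNorm (fun v ↦ g v * Hnorm v ^ β) (ENNReal.ofReal p) volume = 1) :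
    SWbestConst n p q lam α β ≠ 0 := by
  have hne : eLpNorm' (kernelOp volume (steinWeissKernel Hdist 0 α β lam) (weightedFun β g)) q
      volume ≠ 0 := by
    refine eLpNorm'_kernelOp_ne_zero hp hq
      ((quasiMetricGrowth_Hdist n).measurable_steinWeissKernel 0 α β lam) ?_
      (measurable_weightedFun hgm) ?_
    · filter_upwards [ae_Hnorm_pos] with u hu
      filter_upwards [ae_Hnorm_pos, ae_Hdist_pos u] with v hv huv
      rw [steinWeissKernel_Hdist_zero]
      exact (ENNReal.ofReal_pos.2 (by positivity)).ne'
    · rw [lintegral_weightedFun_rpow_eq_one hp hg hg1]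
      exact one_ne_zero
  exact ne_bot_of_le_ne_bot hne
    (eLpNorm'_kernelOp_weightedFun_le_SWbestConst hC hC_top hp hq hgm hg hg1)

end BestConstant

/-! ### Maximizing sequences -/

section MaximizingSequence

variable {n : ℕ} {p p' q lam α β : ℝ}

theorem Hball_zero (R : ℝ) : Hball (0 : Hn n) R = {v | Hnorm v < R} := by
  simp only [Hball, Hdist_zero]

theorem muWD_apply {g : Hn n → ℝ} (hp : 0 ≤ p) (hg : ∀ v, 0 ≤ g v) {A : Set (Hn n)}
    (hA : MeasurableSet A) : muWD p β g A = ∫⁻ v in A, weightedFun β g v ^ p := by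
  rw [muWD, withDensity_apply _ hA]
  refine lintegral_congr fun v ↦ ?_
  have hv := Real.rpow_nonneg (Hnorm_nonneg v) β
  rw [weightedFun, ENNReal.ofReal_rpow_of_nonneg (mul_nonneg (hg v) hv) hp, abs_of_nonneg (hg v),
    Real.mul_rpow (hg v) hv, Real.rpow_mul (Hnorm_nonneg v)]

theorem isProbabilityMeasure_muWD {g : Hn n → ℝ} (hp : 0 < p) (hg : ∀ v, 0 ≤ g v)
    (hg1 : eLpNorm (fun v ↦ g v * Hnorm v ^ β) (ENNReal.ofReal p) volume = 1) :
    IsProbabilityMeasure (muWD p β g) :=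
  ⟨by rw [muWD_apply hp.le hg .univ, setLIntegral_univ,
    lintegral_weightedFun_rpow_eq_one hp hg hg1]⟩

theorem exists_lt_SWbestConst_forall_muWD_far_le (hpp : p.HolderConjugate p') (hpq : p < q)
    (hlam : 0 < lam) (hαβ : 0 ≤ α + β) (hα : α < (2 * n + 2) / q) (hβ : β < (2 * n + 2) / p')
    (hbal : α + β + lam = (2 * n + 2) / p' + (2 * n + 2) / q)
    (hpos : SWbestConst n p q lam α β ≠ 0) {m δ : ℝ≥0∞} (hm : m ≠ 0) (hδ : δ ≠ 0) :
    ∃ c < SWbestConst n p q lam α β, ∃ R : ℝ, ∀ g : Hn n → ℝ, Measurable g → (∀ v, 0 ≤ g v) →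
      eLpNorm (fun v ↦ g v * Hnorm v ^ β) (ENNReal.ofReal p) volume = 1 →
      m ≤ muWD p β g (Hball 0 1) →
      c < eLpNorm (fun u ↦ Ilam lam g u * Hnorm u ^ (-α)) (ENNReal.ofReal q) volume →
      muWD p β g {v | R ≤ Hnorm v} ≤ δ := by
  have hd := quasiMetricGrowth_Hdist n
  have hp := hpp.pos
  have hq := hp.trans hpq
  have hQ : (0 : ℝ) < 2 * n + 2 := by positivity
  have hnorm : Measurable (Hnorm : Hn n → ℝ) := continuous_Hnorm.measurable
  obtain ⟨C, hC_top, hC⟩ := hd.exists_kernelBound_steinWeissKernel 0 hQ hpp hpq hlam hαβ hα hβ hbal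
  have hoff : ∀ ε : ℝ≥0∞, ε ≠ 0 → ∃ L > 1, KernelBound volume p q ε
      (offScale Hnorm L (steinWeissKernel (Hdist (n := n)) 0 α β lam)) := by
    rw [← funext Hdist_zero]
    exact fun ε ↦ hd.exists_kernelBound_offScale_steinWeissKernel 0 hQ hpp hpq hlam.le hα hβ hbal
  obtain ⟨c, hc, R, hR⟩ := (kernelBound_SWbestConst hC hC_top hp hq).exists_lt_forall_mass_far_le
    hoff hpos (ne_top_of_le_ne_top hC_top (SWbestConst_le hC hp hq)) hp (hpp.lt.trans hpq).le hpq
    hnorm (hd.measurable_steinWeissKernel 0 α β lam) hm hδ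
  refine ⟨c, hc, R, fun g hgm hg hg1 hmass hcg ↦ ?_⟩
  rw [Hball_zero, muWD_apply hp.le hg (measurableSet_lt hnorm measurable_const)] at hmass
  rw [muWD_apply hp.le hg (measurableSet_le measurable_const hnorm)]
  exact hR _ (measurable_weightedFun hgm) (lintegral_weightedFun_rpow_eq_one hp hg hg1).le hmass
    (hcg.trans_le (eLpNorm_Ilam_le hq hgm hg))

theorem isTightMeasureSet_range_muWD_of_maximizing (hpp : p.HolderConjugate p') (hpq : p < q)
    (hlam : 0 < lam) (hαβ : 0 ≤ α + β) (hα : α < (2 * n + 2) / q) (hβ : β < (2 * n + 2) / p')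
    (hbal : α + β + lam = (2 * n + 2) / p' + (2 * n + 2) / q) {g : ℕ → Hn n → ℝ}
    (hgm : ∀ i, Measurable (g i)) (hg : ∀ i v, 0 ≤ g i v)
    (hg1 : ∀ i, eLpNorm (fun v ↦ g i v * Hnorm v ^ β) (ENNReal.ofReal p) volume = 1)
    (hmax : Tendsto (fun i ↦ eLpNorm (fun u ↦ Ilam lam (g i) u * Hnorm u ^ (-α))
      (ENNReal.ofReal q) volume) atTop (nhds (SWbestConst n p q lam α β)))
    {m : ℝ≥0∞} (hm : m ≠ 0) (hmass : ∀ i, m ≤ muWD p β (g i) (Hball 0 1)) :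
    IsTightMeasureSet (Set.range fun i ↦ muWD p β (g i)) := by
  have hprob i := isProbabilityMeasure_muWD hpp.pos (hg i) (hg1 i)
  have hpos : SWbestConst n p q lam α β ≠ 0 := by
    obtain ⟨C, hC_top, hC⟩ := (quasiMetricGrowth_Hdist n).exists_kernelBound_steinWeissKernel 0
      (by positivity) hpp hpq hlam hαβ hα hβ hbal
    exact SWbestConst_ne_zero hC hC_top hpp.pos (hpp.pos.trans hpq) (hgm 0) (hg 0) (hg1 0)
  refine isTightMeasureSet_range_of_eventually_cofinite (fun i ↦ isTightMeasureSet_singleton)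
    fun δ hδ ↦ ?_
  obtain ⟨c, hc, R, hR⟩ := exists_lt_SWbestConst_forall_muWD_far_le hpp hpq hlam hαβ hα hβ hbal
    hpos hm hδ.ne'
  refine ⟨{v | Hnorm v ≤ R}, isCompact_setOf_Hnorm_le R, ?_⟩
  rw [Nat.cofinite_eq_atTop]
  filter_upwards [hmax.eventually_const_lt hc] with i hi
  refine (measure_mono fun v hv ↦ ?_).trans (hR (g i) (hgm i) (hg i) (hg1 i) (hmass i) hi)
  exact (lt_of_not_ge hv : R < Hnorm v).le

theorem exists_subset_Hball_zero_of_isCompact {K : Set (Hn n)} (hK : IsCompact K) :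
    ∃ R, 0 < R ∧ K ⊆ Hball 0 R := by
  obtain ⟨R, hR⟩ := (hK.image continuous_Hnorm).bddAbove
  refine ⟨max R 0 + 1, by positivity, fun v hv ↦ ?_⟩
  have hvR : Hnorm v ≤ R := hR ⟨v, hv, rfl⟩
  rw [Hball_zero]
  exact (hvR.trans (le_max_left R 0)).trans_lt (lt_add_one _)

theorem exists_Hball_zero_of_isTight {ι : Type*} {ν : ι → Measure (Hn n)}
    [∀ i, IsProbabilityMeasure (ν i)] (hν : IsTightMeasureSet (Set.range ν)) {ε : ℝ≥0∞}
    (hε : 0 < ε) : ∃ R, 0 < R ∧ ∀ i, 1 - ε ≤ ν i (Hball 0 R) := by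
  obtain ⟨K, hK, hKε⟩ := isTightMeasureSet_iff_exists_isCompact_measure_compl_le.1 hν ε hε
  obtain ⟨R, hR_pos, hKR⟩ := exists_subset_Hball_zero_of_isCompact hK
  refine ⟨R, hR_pos, fun i ↦ ?_⟩
  have hmass : 1 ≤ ν i K + ν i Kᶜ := by
    rw [measure_add_measure_compl hK.measurableSet, measure_univ]
  rw [tsub_le_iff_right]
  exact hmass.trans (add_le_add (measure_mono hKR) (hKε _ (Set.mem_range_self i)))

end MaximizingSequence

/-- **Compactness for a normalized maximizing sequence of the full-weight Stein–Weiss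
inequality** (Lemma 2.2): the compactness alternative holds for `μ_i = |g_i|^p|v|^{βp} dv`,
and any weak-* limit `μ` of a subsequence has total mass `1`. -/
theorem maximizing_sequence_compactness
    (n : ℕ) (hn : 1 ≤ n) (Q p p' q q' lam α β : ℝ) (hQ : Q = 2 * n + 2)
    (hp : 1 < p) (hq' : 1 < q')
    (hq : 1 / q + 1 / q' = 1) (hp' : 1 / p + 1 / p' = 1)
    (hlam0 : 0 < lam) (hlamQ : lam < Q)
    (hab : 0 ≤ α + β) (habQ : lam + α + β ≤ Q)
    (hβ : β < Q / p') (hα : α < Q / q)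
    (hbal : 1 / p + 1 / q' + (lam + α + β) / Q = 2)
    (hpq : p < q)
    (g : ℕ → Hn n → ℝ)
    (hmeas : ∀ i, Measurable (g i)) (hpos : ∀ i v, 0 ≤ g i v)
    (hnorm : ∀ i, eLpNorm (fun v => g i v * Hnorm v ^ β) (ENNReal.ofReal p) volume = 1)
    (hmax : Tendsto
      (fun i => eLpNorm (fun u => Ilam lam (g i) u * Hnorm u ^ (-α))
        (ENNReal.ofReal q) volume) atTop (nhds (SWbestConst n p q lam α β)))
    (hhalf : ∀ i, muWD p β (g i) (Hball (0 : Hn n) 1) = 1 / 2) :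
    (∃ v : ℕ → Hn n, ∀ ε : ℝ, 0 < ε → ∃ R : ℝ, 0 < R ∧
      ∀ i, 1 - ENNReal.ofReal ε ≤ muWD p β (g i) (Hball (v i) R)) ∧
    (∀ φ : ℕ → ℕ, StrictMono φ → ∀ μ : Measure (Hn n),
      (∀ f : Hn n → ℝ, Continuous f → HasCompactSupport f →
        Tendsto (fun i => ∫ u, f u ∂ muWD p β (g (φ i))) atTop (nhds (∫ u, f u ∂ μ))) →
      μ Set.univ = 1) := by
  subst hQ
  have hpp : p.HolderConjugate p' := by
    rw [Real.holderConjugate_iff]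
    exact ⟨hp, by simpa using hp'⟩
  have hbal' : α + β + lam = (2 * n + 2) / p' + (2 * n + 2) / q := by
    have hscaled : (lam + α + β) / (2 * n + 2) * (2 * n + 2) = lam + α + β := by field_simp
    linear_combination (2 * n + 2) * (hbal - hp' - hq) - hscaled
  have hprob i := isProbabilityMeasure_muWD hpp.pos (hpos i) (hnorm i)
  have htight := isTightMeasureSet_range_muWD_of_maximizing hpp hpq hlam0 hab hα hβ hbal' hmeas
    hpos hnorm hmax (by simp) fun i ↦ (hhalf i).ge
  refine ⟨⟨fun _ ↦ 0, fun ε hε ↦ exists_Hball_zero_of_isTight htight (ofReal_pos.2 hε)⟩,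
    fun φ _ μ hμ ↦ ?_⟩
  have htightφ : IsTightMeasureSet (Set.range fun i ↦ muWD p β (g (φ i))) :=
    htight.subset (Set.range_comp_subset_range φ fun i ↦ muWD p β (g i))
  exact measure_univ_eq_one_of_isTight_of_vague htightφ hμ
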